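/- arXiv:2605.02097 — 2 statements merged into one kernel-verified Lean document; each statement's English description precedes it below -/
import Mathlib

section
/- Let ρ be a three-qubit density matrix (positive semidefinite 8×8 complex matrix with trace 1, the Hilbert space being ℂ²⊗ℂ²⊗ℂ²), and let E_{φ_ABC}(ρ) be the convex-roof extension of φ_ABC. Then E_{φ_ABC}(ρ) = 0 if and only if ρ is fully separable. -/
open scoped BigOperators Kronecker ComplexOrder
open Matrix

noncomputable section

abbrev Q3 : Type := Fin 2 × Fin 2 × Fin 2

/-- Two-party reduced density matrix `ρ_AB` of a three-qubit pure state. -/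
def rhoAB (Ψ : Q3 → ℂ) : Matrix (Fin 2 × Fin 2) (Fin 2 × Fin 2) ℂ :=
  fun p q => ∑ c : Fin 2, Ψ (p.1, p.2, c) * (starRingEnd ℂ) (Ψ (q.1, q.2, c))

/-- Single-party reduced density matrix `ρ_A`. -/
def rhoA (Ψ : Q3 → ℂ) : Matrix (Fin 2) (Fin 2) ℂ :=
  fun a a' => ∑ b : Fin 2, ∑ c : Fin 2, Ψ (a, b, c) * (starRingEnd ℂ) (Ψ (a', b, c))

/-- Single-party reduced density matrix `ρ_B`. -/
def rhoB (Ψ : Q3 → ℂ) : Matrix (Fin 2) (Fin 2) ℂ :=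
  fun b b' => ∑ a : Fin 2, ∑ c : Fin 2, Ψ (a, b, c) * (starRingEnd ℂ) (Ψ (a, b', c))

/-- The entanglement measure `φ_ABC` of a three-qubit pure state. -/
def phiABC (Ψ : Q3 → ℂ) : ℝ :=
  69 - ((((2 : ℂ) • rhoAB Ψ + rhoA Ψ ⊗ₖ (1 : Matrix (Fin 2) (Fin 2) ℂ)
          + (1 : Matrix (Fin 2) (Fin 2) ℂ) ⊗ₖ rhoB Ψ) ^ 3).trace).re
    - 3 * (((rhoAB Ψ) ^ 2).trace).re

/-- Convex-roof extension of a real-valued function on three-qubit pure states. -/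
def convexRoof (f : (Q3 → ℂ) → ℝ) (ρ : Matrix Q3 Q3 ℂ) : ℝ :=
  sInf {x : ℝ | ∃ (m : ℕ) (p : Fin m → ℝ) (ψ : Fin m → Q3 → ℂ),
    (∀ ℓ, 0 < p ℓ) ∧ (∑ ℓ, p ℓ = 1) ∧ (∀ ℓ, ∑ v : Q3, ‖ψ ℓ v‖ ^ 2 = 1) ∧
    ρ = ∑ ℓ, (p ℓ : ℂ) • Matrix.vecMulVec (ψ ℓ) (star (ψ ℓ)) ∧
    x = ∑ ℓ, p ℓ * f (ψ ℓ)}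

/-- Full separability of a three-qubit density matrix. -/
def FullySep3 (ρ : Matrix Q3 Q3 ℂ) : Prop :=
  ∃ (m : ℕ) (p : Fin m → ℝ)
    (f : Fin m → Fin 2 → ℂ) (g : Fin m → Fin 2 → ℂ) (h : Fin m → Fin 2 → ℂ),
    (∀ j, 0 ≤ p j) ∧ (∑ j, p j = 1) ∧
    (∀ j, ∑ v : Q3, ‖f j v.1 * g j v.2.1 * h j v.2.2‖ ^ 2 = 1) ∧
    ρ = ∑ j, (p j : ℂ) •
      Matrix.vecMulVec (fun v : Q3 => f j v.1 * g j v.2.1 * h j v.2.2)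
        (star fun v : Q3 => f j v.1 * g j v.2.1 * h j v.2.2)

/-!
For a unit vector `Ψ`, expanding the cube writes `φ_ABC(Ψ)` as a positive combination of deficits
`1 - Tr X`, where `X` runs over `M³`, `M²`, `M²(A ⊗ 1)`, `M²(1 ⊗ B)`, `M(A ⊗ B)`, `A²`, `A³`, `B²`
and `B³` with `M = ρ_AB`, `A = ρ_A`, `B = ρ_B`; the constant `69` is the sum of the weights. Every
deficit is nonnegative because a density matrix lies between `0` and `1`. If they all vanish, then
`A` and `B` are pure, so by Lagrange's identity the minors of `Ψ` across the cuts `A | BC` and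
`B | AC` vanish and `Ψ` is a product vector. If conversely `Ψ` is a product vector, then
`M = A ⊗ B` with `A`, `B` idempotent, and every deficit is zero.

The convex roof of a continuous `f` is attained: the pairs `(|ψ⟩⟨ψ|, f ψ)` with `ψ` a unit vector
form a compact set, and by Carathéodory's theorem its convex hull is compact too. Hence for
`f ≥ 0` the roof vanishes at `ρ` exactly when `ρ` is a mixture of pure states on which `f`
vanishes.
-/

section ConvexHull

variable {𝕜 E : Type*} [AddCommGroup E]

theorem exists_fin_of_mem_convexHull [Field 𝕜] [LinearOrder 𝕜] [IsStrictOrderedRing 𝕜]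
    [Module 𝕜 E] [FiniteDimensional 𝕜 E] {s : Set E} {x : E} (hx : x ∈ convexHull 𝕜 s) :
    ∃ m ≤ Module.finrank 𝕜 E + 1, ∃ (w : Fin m → 𝕜) (z : Fin m → E),
      (∀ i, 0 < w i) ∧ ∑ i, w i = 1 ∧ (∀ i, z i ∈ s) ∧ ∑ i, w i • z i = x := by
  obtain ⟨ι, _, z, w, hzs, hz, hw, hw1, rfl⟩ := eq_pos_convex_span_of_mem_convexHull hx
  let e := (Fintype.equivFin ι).symm
  exact ⟨Fintype.card ι, hz.card_le_finrank_succ.trans (by gcongr; exact Submodule.finrank_le _),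
    w ∘ e, z ∘ e, fun i => hw _, (e.sum_comp w).trans hw1, fun i => hzs ⟨_, rfl⟩,
    e.sum_comp fun i => w i • z i⟩

theorem isCompact_convexHull [Module ℝ E] [FiniteDimensional ℝ E] [TopologicalSpace E]
    [ContinuousAdd E] [ContinuousSMul ℝ E] {s : Set E} (hs : IsCompact s) :
    IsCompact (convexHull ℝ s) := by
  let combinations (m : ℕ) : Set E :=
    (fun q : (Fin m → ℝ) × (Fin m → E) => ∑ i, q.1 i • q.2 i) ''
      (stdSimplex ℝ (Fin m) ×ˢ Set.univ.pi fun _ => s)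
  have isCompact_combinations (m : ℕ) : IsCompact (combinations m) :=
    ((isCompact_stdSimplex ℝ (Fin m)).prod (isCompact_univ_pi fun _ => hs)).image (by fun_prop)
  have convexHull_eq_biUnion :
      convexHull ℝ s = ⋃ m ∈ Set.Iic (Module.finrank ℝ E + 1), combinations m := by
    ext x
    simp only [Set.mem_iUnion]
    constructor
    · intro hx
      obtain ⟨m, hm, w, z, hw, hw1, hz, rfl⟩ := exists_fin_of_mem_convexHull hx
      exact ⟨m, hm, (w, z), ⟨⟨fun i => (hw i).le, hw1⟩, fun i _ => hz i⟩, rfl⟩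
    · rintro ⟨m, -, ⟨w, z⟩, ⟨⟨hw, hw1⟩, hz⟩, rfl⟩
      exact mem_convexHull_of_exists_fintype w z hw hw1 (fun i => hz i trivial) rfl
  rw [convexHull_eq_biUnion]
  exact (Set.finite_Iic _).isCompact_biUnion fun m _ => isCompact_combinations m

theorem snd_nonneg_of_mem_convexHull [Field 𝕜] [LinearOrder 𝕜] [IsStrictOrderedRing 𝕜]
    [Module 𝕜 E] {s : Set (E × 𝕜)} (hs : ∀ p ∈ s, 0 ≤ p.2) {p : E × 𝕜}
    (hp : p ∈ convexHull 𝕜 s) : 0 ≤ p.2 :=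
  convexHull_min hs (convex_halfSpace_ge (LinearMap.snd 𝕜 E 𝕜).isLinear 0) hp

theorem mk_zero_mem_convexHull_iff [Field 𝕜] [LinearOrder 𝕜] [IsStrictOrderedRing 𝕜]
    [Module 𝕜 E] {s : Set (E × 𝕜)} (hs : ∀ p ∈ s, 0 ≤ p.2) {x : E} :
    (x, 0) ∈ convexHull 𝕜 s ↔ x ∈ convexHull 𝕜 {y | (y, 0) ∈ s} := by
  constructor
  · intro hx
    obtain ⟨ι, _, z, w, hzs, -, hw, hw1, hsum⟩ := eq_pos_convex_span_of_mem_convexHull hx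
    have hz (i : ι) : z i ∈ s := hzs ⟨i, rfl⟩
    have snd_sum : ∑ i, w i * (z i).2 = 0 := by
      simpa [Prod.snd_sum] using congrArg Prod.snd hsum
    have snd_eq_zero (i : ι) : (z i).2 = 0 := by
      have := (Finset.sum_eq_zero_iff_of_nonneg fun i _ =>
        mul_nonneg (hw i).le (hs _ (hz i))).1 snd_sum i (Finset.mem_univ i)
      exact (mul_eq_zero.1 this).resolve_left (hw i).ne'
    refine mem_convexHull_of_exists_fintype w (fun i => (z i).1) (fun i => (hw i).le) hw1
      (fun i => ?_) (by simpa [Prod.fst_sum] using congrArg Prod.fst hsum)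
    simpa only [Set.mem_ofPred_eq, ← snd_eq_zero i] using hz i
  · intro hx
    have hx' : LinearMap.inl 𝕜 E 𝕜 x ∈ convexHull 𝕜 (LinearMap.inl 𝕜 E 𝕜 '' {y | (y, 0) ∈ s}) :=
      (LinearMap.inl 𝕜 E 𝕜).image_convexHull _ ▸ Set.mem_image_of_mem _ hx
    exact convexHull_mono (Set.image_subset_iff.2 fun y hy => hy) hx'

end ConvexHull

section DensityMatrix

variable {𝕜 m n : Type*} [RCLike 𝕜]

theorem one_sub_kronecker_posSemidef [Finite m] [Finite n] [DecidableEq m] [DecidableEq n]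
    {P : Matrix m m 𝕜} {Q : Matrix n n 𝕜} (hP : (1 - P).PosSemidef) (hQ : Q.PosSemidef)
    (hQ1 : (1 - Q).PosSemidef) : (1 - P ⊗ₖ Q).PosSemidef := by
  cases nonempty_fintype m
  cases nonempty_fintype n
  have decompose : 1 - P ⊗ₖ Q = (1 - P) ⊗ₖ Q + (1 : Matrix m m 𝕜) ⊗ₖ (1 - Q) := by
    rw [← one_kronecker_one]
    ext i j
    simp only [Matrix.sub_apply, Matrix.add_apply, kroneckerMap_apply]
    ring
  exact decompose ▸ (hP.kronecker hQ).add (PosSemidef.one.kronecker hQ1)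

variable [Fintype m] [Fintype n]

open scoped MatrixOrder Matrix.Norms.L2Operator in
theorem trace_mul_nonneg_of_posSemidef {P Q : Matrix n n 𝕜} (hP : P.PosSemidef)
    (hQ : Q.PosSemidef) : 0 ≤ (P * Q).trace := by
  classical
  obtain ⟨B, rfl⟩ := CStarAlgebra.nonneg_iff_eq_star_mul_self.mp hP.nonneg
  rw [star_eq_conjTranspose, Matrix.mul_assoc, trace_mul_comm]
  exact (hQ.mul_mul_conjTranspose_same B).trace_nonneg

theorem trace_mul_le_trace_of_posSemidef [DecidableEq n] {P Q : Matrix n n 𝕜} (hP : P.PosSemidef)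
    (hQ : (1 - Q).PosSemidef) : (P * Q).trace ≤ P.trace := by
  simpa [Matrix.mul_sub] using trace_mul_nonneg_of_posSemidef hP hQ

/-- A density matrix: the mathematical model of a (possibly mixed) quantum state. -/
structure IsDensityMatrix (M : Matrix n n 𝕜) : Prop where
  posSemidef : M.PosSemidef
  trace_eq_one : M.trace = 1

namespace IsDensityMatrix

variable {M : Matrix n n 𝕜}

theorem sum_eigenvalues [DecidableEq n] (hM : IsDensityMatrix M) :
    ∑ i, hM.posSemidef.isHermitian.eigenvalues i = 1 := by
  have := hM.posSemidef.isHermitian.trace_eq_sum_eigenvalues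
  rw [hM.trace_eq_one] at this
  exact_mod_cast this.symm

open scoped MatrixOrder in
theorem one_sub_posSemidef [DecidableEq n] (hM : IsDensityMatrix M) : (1 - M).PosSemidef := by
  have hH := hM.posSemidef.isHermitian
  rw [← Matrix.le_iff, ← map_one (algebraMap ℝ (Matrix n n 𝕜)),
    le_algebraMap_iff_spectrum_le hH, hH.spectrum_real_eq_range_eigenvalues,
    Set.forall_mem_range]
  intro i
  rw [← hM.sum_eigenvalues]
  exact Finset.single_le_sum (fun j _ => hM.posSemidef.eigenvalues_nonneg j) (Finset.mem_univ i)

theorem trace_pow_succ_le_one [DecidableEq n] (hM : IsDensityMatrix M) (k : ℕ) :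
    (M ^ (k + 1)).trace ≤ 1 := by
  induction k with
  | zero => simp [hM.trace_eq_one]
  | succ k ih =>
    rw [pow_succ]
    exact (trace_mul_le_trace_of_posSemidef (hM.posSemidef.pow _) hM.one_sub_posSemidef).trans ih

theorem kronecker {A : Matrix m m 𝕜} {B : Matrix n n 𝕜} (hA : IsDensityMatrix A)
    (hB : IsDensityMatrix B) : IsDensityMatrix (A ⊗ₖ B) where
  posSemidef := hA.posSemidef.kronecker hB.posSemidef
  trace_eq_one := by rw [trace_kronecker, hA.trace_eq_one, hB.trace_eq_one, mul_one]

end IsDensityMatrix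

end DensityMatrix

section PartialTrace

variable {R m n : Type*}

/-- The marginal on the first factor of an operator on a bipartite space: its partial trace over
the second factor. -/
def partialTraceRight [AddCommMonoid R] [Fintype n] (M : Matrix (m × n) (m × n) R) :
    Matrix m m R :=
  .of fun i i' => ∑ j, M (i, j) (i', j)

/-- The marginal on the second factor of an operator on a bipartite space: its partial trace over
the first factor. -/
def partialTraceLeft [AddCommMonoid R] [Fintype m] (M : Matrix (m × n) (m × n) R) :
    Matrix n n R :=
  .of fun j j' => ∑ i, M (i, j) (i, j')

theorem partialTraceRight_kronecker [CommSemiring R] [Fintype n] (A : Matrix m m R)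
    (B : Matrix n n R) : partialTraceRight (A ⊗ₖ B) = B.trace • A := by
  ext i i'
  simp only [partialTraceRight, of_apply, kroneckerMap_apply, ← Finset.mul_sum, Matrix.smul_apply,
    smul_eq_mul, trace, diag_apply, mul_comm]

theorem partialTraceLeft_kronecker [CommSemiring R] [Fintype m] (A : Matrix m m R)
    (B : Matrix n n R) : partialTraceLeft (A ⊗ₖ B) = A.trace • B := by
  ext j j'
  simp only [partialTraceLeft, of_apply, kroneckerMap_apply, ← Finset.sum_mul, Matrix.smul_apply,
    smul_eq_mul, trace, diag_apply]

variable [Fintype m] [Fintype n]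

theorem trace_partialTraceRight [AddCommMonoid R] (M : Matrix (m × n) (m × n) R) :
    (partialTraceRight M).trace = M.trace := by
  simp only [trace, diag_apply, partialTraceRight, of_apply, Fintype.sum_prod_type]

theorem trace_partialTraceLeft [AddCommMonoid R] (M : Matrix (m × n) (m × n) R) :
    (partialTraceLeft M).trace = M.trace := by
  simp only [trace, diag_apply, partialTraceLeft, of_apply, Fintype.sum_prod_type_right]

theorem trace_mul_kronecker_one [NonAssocSemiring R] [DecidableEq n]
    (M : Matrix (m × n) (m × n) R) (C : Matrix m m R) :
    (M * (C ⊗ₖ (1 : Matrix n n R))).trace = (partialTraceRight M * C).trace := by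
  simp only [trace, diag_apply, mul_apply, Fintype.sum_prod_type, kroneckerMap_apply, one_apply,
    mul_ite, mul_one, mul_zero, Finset.sum_ite_eq', Finset.mem_univ, if_true, partialTraceRight,
    of_apply, Finset.sum_mul]
  exact Finset.sum_congr rfl fun i _ => Finset.sum_comm

theorem trace_mul_one_kronecker [NonAssocSemiring R] [DecidableEq m]
    (M : Matrix (m × n) (m × n) R) (C : Matrix n n R) :
    (M * ((1 : Matrix m m R) ⊗ₖ C)).trace = (partialTraceLeft M * C).trace := by
  simp only [trace, diag_apply, mul_apply, Fintype.sum_prod_type_right, kroneckerMap_apply,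
    one_apply, ite_mul, one_mul, zero_mul, mul_ite, mul_zero, Finset.sum_ite_eq', Finset.mem_univ,
    if_true, partialTraceLeft, of_apply, Finset.sum_mul]
  exact Finset.sum_congr rfl fun i _ => Finset.sum_comm

namespace IsDensityMatrix

variable {𝕜 : Type*} [RCLike 𝕜] {M : Matrix (m × n) (m × n) 𝕜}

theorem partialTraceRight (hM : IsDensityMatrix M) : IsDensityMatrix (partialTraceRight M) where
  posSemidef := by
    have : _root_.partialTraceRight M = ∑ j, M.submatrix (·, j) (·, j) := by
      ext i i'
      simp [_root_.partialTraceRight, Matrix.sum_apply]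
    exact this ▸ posSemidef_sum _ fun j _ => hM.posSemidef.submatrix _
  trace_eq_one := (trace_partialTraceRight M).trans hM.trace_eq_one

theorem partialTraceLeft (hM : IsDensityMatrix M) : IsDensityMatrix (partialTraceLeft M) where
  posSemidef := by
    have : _root_.partialTraceLeft M = ∑ i, M.submatrix (i, ·) (i, ·) := by
      ext j j'
      simp [_root_.partialTraceLeft, Matrix.sum_apply]
    exact this ▸ posSemidef_sum _ fun i _ => hM.posSemidef.submatrix _
  trace_eq_one := (trace_partialTraceLeft M).trans hM.trace_eq_one

end IsDensityMatrix

end PartialTrace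

section CubeExpansion

variable {R m n : Type*} [CommRing R] [Fintype m] [Fintype n] [DecidableEq m] [DecidableEq n]

theorem trace_add_pow_three (X Y : Matrix n n R) :
    ((X + Y) ^ 3).trace = (X ^ 3).trace + 3 * (X ^ 2 * Y).trace + 3 * (X * Y ^ 2).trace
      + (Y ^ 3).trace := by
  have expand : (X + Y) ^ 3 = X ^ 3 + (X ^ 2 * Y + X * Y * X + Y * X ^ 2)
      + (X * Y ^ 2 + Y * X * Y + Y ^ 2 * X) + Y ^ 3 := by noncomm_ring
  have xyx : (X * Y * X).trace = (X ^ 2 * Y).trace := by rw [trace_mul_cycle, pow_two]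
  have yxx : (Y * X ^ 2).trace = (X ^ 2 * Y).trace := trace_mul_comm _ _
  have yxy : (Y * X * Y).trace = (X * Y ^ 2).trace := by
    rw [trace_mul_comm, ← Matrix.mul_assoc, trace_mul_comm, pow_two]
  have yyx : (Y ^ 2 * X).trace = (X * Y ^ 2).trace := trace_mul_comm _ _
  simp only [expand, trace_add, xyx, yxx, yxy, yyx]
  ring

theorem kronecker_pow (A : Matrix m m R) (B : Matrix n n R) (k : ℕ) :
    (A ⊗ₖ B) ^ k = (A ^ k) ⊗ₖ (B ^ k) := by
  induction k with
  | zero => simp only [pow_zero, one_kronecker_one]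
  | succ k ih => simp only [pow_succ, ih, mul_kronecker_mul]

theorem kronecker_one_add_one_kronecker_sq (A : Matrix m m R) (B : Matrix n n R) :
    (A ⊗ₖ (1 : Matrix n n R) + (1 : Matrix m m R) ⊗ₖ B) ^ 2
      = (A ^ 2) ⊗ₖ (1 : Matrix n n R) + (2 : R) • (A ⊗ₖ B) + (1 : Matrix m m R) ⊗ₖ (B ^ 2) := by
  have mul_eq : (A ⊗ₖ (1 : Matrix n n R)) * ((1 : Matrix m m R) ⊗ₖ B) = A ⊗ₖ B := by
    rw [← mul_kronecker_mul, Matrix.mul_one, Matrix.one_mul]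
  have commute : Commute (A ⊗ₖ (1 : Matrix n n R)) ((1 : Matrix m m R) ⊗ₖ B) := by
    rw [Commute, SemiconjBy, mul_eq, ← mul_kronecker_mul, Matrix.mul_one, Matrix.one_mul]
  rw [commute.add_sq, mul_assoc, mul_eq, kronecker_pow, kronecker_pow, one_pow, one_pow, two_smul,
    two_mul]

theorem trace_cube_kronecker_one_add_one_kronecker (A : Matrix m m R) (B : Matrix n n R) :
    ((A ⊗ₖ (1 : Matrix n n R) + (1 : Matrix m m R) ⊗ₖ B) ^ 3).trace
      = Fintype.card n * (A ^ 3).trace + 3 * ((A ^ 2).trace * B.trace)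
        + 3 * (A.trace * (B ^ 2).trace) + Fintype.card m * (B ^ 3).trace := by
  simp only [trace_add_pow_three, kronecker_pow, one_pow, ← mul_kronecker_mul, Matrix.mul_one,
    Matrix.one_mul, trace_kronecker, trace_one, mul_comm]

theorem trace_cube_two_smul_add_marginals (M : Matrix (m × n) (m × n) R) {A : Matrix m m R}
    {B : Matrix n n R} (hA : partialTraceRight M = A) (hB : partialTraceLeft M = B) :
    (((2 : R) • M + A ⊗ₖ (1 : Matrix n n R) + (1 : Matrix m m R) ⊗ₖ B) ^ 3).trace
      = 8 * (M ^ 3).trace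
        + 12 * (M ^ 2 * (A ⊗ₖ (1 : Matrix n n R))).trace
        + 12 * (M ^ 2 * ((1 : Matrix m m R) ⊗ₖ B)).trace
        + 12 * (M * (A ⊗ₖ B)).trace
        + (6 + Fintype.card n) * (A ^ 3).trace + (6 + Fintype.card m) * (B ^ 3).trace
        + 3 * ((A ^ 2).trace * B.trace) + 3 * (A.trace * (B ^ 2).trace) := by
  have hA3 : (M * ((A ^ 2) ⊗ₖ (1 : Matrix n n R))).trace = (A ^ 3).trace := by
    rw [trace_mul_kronecker_one, hA, ← pow_succ']
  have hB3 : (M * ((1 : Matrix m m R) ⊗ₖ (B ^ 2))).trace = (B ^ 3).trace := by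
    rw [trace_mul_one_kronecker, hB, ← pow_succ']
  rw [add_assoc, trace_add_pow_three, trace_cube_kronecker_one_add_one_kronecker,
    kronecker_one_add_one_kronecker_sq]
  simp only [smul_pow, Matrix.smul_mul, Matrix.mul_smul, Matrix.mul_add, trace_add, trace_smul,
    smul_eq_mul, hA3, hB3]
  ring

end CubeExpansion

section Purity

variable {𝕜 m n : Type*} [RCLike 𝕜] [Fintype n]

/-- Lagrange's identity for the rows `i` and `j` of `V`. -/
theorem sum_norm_minor_sq (V : Matrix m n 𝕜) (i j : m) :
    ((∑ k, ∑ l, ‖V i k * V j l - V j k * V i l‖ ^ 2 : ℝ) : 𝕜)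
      = 2 * ((V * Vᴴ) i i * (V * Vᴴ) j j - (V * Vᴴ) i j * (V * Vᴴ) j i) := by
  have gram_mul_gram (a b c d : m) : (V * Vᴴ) a b * (V * Vᴴ) c d
      = ∑ k, ∑ l, V a k * star (V b k) * (V c l * star (V d l)) := by
    simp only [mul_apply, conjTranspose_apply, Finset.sum_mul_sum]
  calc ((∑ k, ∑ l, ‖V i k * V j l - V j k * V i l‖ ^ 2 : ℝ) : 𝕜)
      = ∑ k, ∑ l, (V i k * V j l - V j k * V i l) * star (V i k * V j l - V j k * V i l) := by
        push_cast
        simp only [← RCLike.mul_conj, RCLike.star_def]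
    _ = (V * Vᴴ) i i * (V * Vᴴ) j j + (V * Vᴴ) j j * (V * Vᴴ) i i
          - (V * Vᴴ) i j * (V * Vᴴ) j i - (V * Vᴴ) j i * (V * Vᴴ) i j := by
        simp only [gram_mul_gram, ← Finset.sum_add_distrib, ← Finset.sum_sub_distrib, star_sub,
          star_mul']
        exact Finset.sum_congr rfl fun k _ => Finset.sum_congr rfl fun l _ => by ring
    _ = 2 * ((V * Vᴴ) i i * (V * Vᴴ) j j - (V * Vᴴ) i j * (V * Vᴴ) j i) := by ring

variable [Fintype m]

theorem trace_mul_conjTranspose_self_eq_sum_norm_sq (V : Matrix m n 𝕜) :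
    (V * Vᴴ).trace = ((∑ i, ∑ k, ‖V i k‖ ^ 2 : ℝ) : 𝕜) := by
  push_cast
  simp only [trace, diag_apply, mul_apply, conjTranspose_apply, RCLike.star_def, RCLike.mul_conj]

theorem isDensityMatrix_mul_conjTranspose_self {V : Matrix m n 𝕜}
    (hV : ∑ i, ∑ k, ‖V i k‖ ^ 2 = 1) : IsDensityMatrix (V * Vᴴ) where
  posSemidef := posSemidef_self_mul_conjTranspose V
  trace_eq_one := by
    rw [trace_mul_conjTranspose_self_eq_sum_norm_sq, hV, RCLike.ofReal_one]

theorem sum_sum_norm_minor_sq [DecidableEq m] (V : Matrix m n 𝕜) :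
    ((∑ i, ∑ j, ∑ k, ∑ l, ‖V i k * V j l - V j k * V i l‖ ^ 2 : ℝ) : 𝕜)
      = 2 * ((V * Vᴴ).trace ^ 2 - ((V * Vᴴ) ^ 2).trace) := by
  calc ((∑ i, ∑ j, ∑ k, ∑ l, ‖V i k * V j l - V j k * V i l‖ ^ 2 : ℝ) : 𝕜)
      = ∑ i, ∑ j, ((∑ k, ∑ l, ‖V i k * V j l - V j k * V i l‖ ^ 2 : ℝ) : 𝕜) := by push_cast; rfl
    _ = ∑ i, ∑ j, 2 * ((V * Vᴴ) i i * (V * Vᴴ) j j - (V * Vᴴ) i j * (V * Vᴴ) j i) := by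
        simp only [sum_norm_minor_sq]
    _ = _ := by
        simp only [← Finset.mul_sum, Finset.sum_sub_distrib, ← Finset.sum_mul, pow_two, trace,
          diag_apply, mul_apply (M := V * Vᴴ)]

theorem minor_eq_zero_of_trace_sq_eq [DecidableEq m] {V : Matrix m n 𝕜}
    (hV : ((V * Vᴴ) ^ 2).trace = (V * Vᴴ).trace ^ 2) (i j : m) (k l : n) :
    V i k * V j l - V j k * V i l = 0 := by
  have sum_eq_zero : ∑ q : m × m × n × n,
      ‖V q.1 q.2.2.1 * V q.2.1 q.2.2.2 - V q.2.1 q.2.2.1 * V q.1 q.2.2.2‖ ^ 2 = 0 := by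
    simp only [Fintype.sum_prod_type]
    have := sum_sum_norm_minor_sq V
    rw [hV, sub_self, mul_zero] at this
    exact_mod_cast this
  have := (Finset.sum_eq_zero_iff_of_nonneg fun q _ => sq_nonneg _).1 sum_eq_zero (i, j, k, l)
    (Finset.mem_univ _)
  exact norm_eq_zero.1 (pow_eq_zero_iff two_ne_zero |>.1 this)

end Purity

section ProductVector

variable {α β γ R : Type*}

/-- The elementary tensor `f ⊗ g ⊗ k`, in coordinates. -/
def productVector [Mul R] (f : α → R) (g : β → R) (k : γ → R) : α × β × γ → R :=
  fun v => f v.1 * g v.2.1 * k v.2.2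

/-- Elementary tensors, i.e. (unnormalized) fully separable pure states. -/
def IsProductVector [Mul R] (Ψ : α × β × γ → R) : Prop :=
  ∃ f g k, Ψ = productVector f g k

/-- The coefficient matrix of a tripartite vector across the cut `A | BC`. -/
def flattenA (Ψ : α × β × γ → R) : Matrix α (β × γ) R := .of fun a v => Ψ (a, v)

/-- The coefficient matrix of a tripartite vector across the cut `B | AC`. -/
def flattenB (Ψ : α × β × γ → R) : Matrix β (α × γ) R := .of fun b v => Ψ (v.1, b, v.2)

/-- The coefficient matrix of a tripartite vector across the cut `AB | C`. -/
def flattenAB (Ψ : α × β × γ → R) : Matrix (α × β) γ R := .of fun u c => Ψ (u.1, u.2, c)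

theorem isProductVector_of_flatten_minors_eq_zero [Field R] {Ψ : α × β × γ → R}
    (hA : ∀ a a' v w, flattenA Ψ a v * flattenA Ψ a' w - flattenA Ψ a' v * flattenA Ψ a w = 0)
    (hB : ∀ b b' v w, flattenB Ψ b v * flattenB Ψ b' w - flattenB Ψ b' v * flattenB Ψ b w = 0) :
    IsProductVector Ψ := by
  by_cases hΨ : Ψ = 0
  · exact ⟨0, 0, 0, by ext; simp [hΨ, productVector]⟩
  obtain ⟨⟨a₀, b₀, c₀⟩, h₀⟩ := Function.ne_iff.1 hΨ
  replace h₀ : Ψ (a₀, b₀, c₀) ≠ 0 := h₀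
  refine ⟨fun a => Ψ (a, b₀, c₀) / Ψ (a₀, b₀, c₀), fun b => Ψ (a₀, b, c₀) / Ψ (a₀, b₀, c₀),
    fun c => Ψ (a₀, b₀, c), ?_⟩
  ext ⟨a, b, c⟩
  have swap_a : Ψ (a, b, c) * Ψ (a₀, b₀, c₀) = Ψ (a₀, b, c) * Ψ (a, b₀, c₀) :=
    sub_eq_zero.1 (hA a a₀ (b, c) (b₀, c₀))
  have swap_b : Ψ (a₀, b, c) * Ψ (a₀, b₀, c₀) = Ψ (a₀, b₀, c) * Ψ (a₀, b, c₀) :=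
    sub_eq_zero.1 (hB b b₀ (a₀, c) (a₀, c₀))
  simp only [productVector]
  field_simp
  linear_combination Ψ (a₀, b₀, c₀) * swap_a + Ψ (a, b₀, c₀) * swap_b

end ProductVector

section UnitVector

variable {n : Type*} [Fintype n]

/-- Unit vectors for the Hermitian norm; on the bare function type `n → ℂ`, `‖ψ‖` would be the
sup norm. -/
def unitVectors (n : Type*) [Fintype n] : Set (n → ℂ) :=
  {ψ | ∑ v, ‖ψ v‖ ^ 2 = 1}

theorem isCompact_unitVectors : IsCompact (unitVectors n) := by
  refine Metric.isCompact_of_isClosed_isBounded (isClosed_eq (by fun_prop) continuous_const)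
    ((Metric.isBounded_closedBall (x := 0) (r := 1)).subset fun ψ hψ => ?_)
  refine mem_closedBall_zero_iff.2 ((pi_norm_le_iff_of_nonneg zero_le_one).2 fun v => ?_)
  refine (sq_le_one_iff₀ (norm_nonneg _)).1 ?_
  rw [← (hψ : ∑ v, ‖ψ v‖ ^ 2 = 1)]
  exact Finset.single_le_sum (f := fun v => ‖ψ v‖ ^ 2) (fun _ _ => sq_nonneg _)
    (Finset.mem_univ v)

end UnitVector

section KroneckerRankOne

variable {R m n : Type*} [CommRing R] [Fintype m] [Fintype n] {X : Matrix m m R} {Y : Matrix n n R}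

theorem kronecker_eq_kronecker_marginals (h : (X ⊗ₖ Y).trace = 1) :
    X ⊗ₖ Y = partialTraceRight (X ⊗ₖ Y) ⊗ₖ partialTraceLeft (X ⊗ₖ Y) := by
  rw [trace_kronecker] at h
  rw [partialTraceRight_kronecker, partialTraceLeft_kronecker, smul_kronecker, kronecker_smul,
    smul_smul, mul_comm, h, one_smul]

theorem vecMulVec_mul_self_eq_trace_smul (u v : n → R) :
    vecMulVec u v * vecMulVec u v = (vecMulVec u v).trace • vecMulVec u v := by
  rw [vecMulVec_mul_vecMulVec, trace_vecMulVec, vecMulVec_smul, dotProduct_comm]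

theorem isIdempotentElem_partialTraceRight_kronecker (h : (X ⊗ₖ Y).trace = 1)
    (hX : X * X = X.trace • X) : IsIdempotentElem (partialTraceRight (X ⊗ₖ Y)) := by
  rw [trace_kronecker] at h
  rw [IsIdempotentElem, partialTraceRight_kronecker, smul_mul_smul_comm, hX, smul_smul,
    mul_assoc, mul_comm Y.trace X.trace, h, mul_one]

theorem isIdempotentElem_partialTraceLeft_kronecker (h : (X ⊗ₖ Y).trace = 1)
    (hY : Y * Y = Y.trace • Y) : IsIdempotentElem (partialTraceLeft (X ⊗ₖ Y)) := by
  rw [trace_kronecker] at h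
  rw [IsIdempotentElem, partialTraceLeft_kronecker, smul_mul_smul_comm, hY, smul_smul,
    mul_assoc, h, mul_one]

end KroneckerRankOne

section ReducedState

theorem rhoAB_eq_flatten_mul_conjTranspose (Ψ : Q3 → ℂ) :
    rhoAB Ψ = flattenAB Ψ * (flattenAB Ψ)ᴴ :=
  rfl

theorem rhoA_eq_flatten_mul_conjTranspose (Ψ : Q3 → ℂ) :
    rhoA Ψ = flattenA Ψ * (flattenA Ψ)ᴴ := by
  ext a a'
  simp only [rhoA, mul_apply, Fintype.sum_prod_type, conjTranspose_apply, flattenA, of_apply,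
    starRingEnd_apply]

theorem rhoB_eq_flatten_mul_conjTranspose (Ψ : Q3 → ℂ) :
    rhoB Ψ = flattenB Ψ * (flattenB Ψ)ᴴ := by
  ext b b'
  simp only [rhoB, mul_apply, Fintype.sum_prod_type, conjTranspose_apply, flattenB, of_apply,
    starRingEnd_apply]

theorem partialTraceRight_rhoAB (Ψ : Q3 → ℂ) : partialTraceRight (rhoAB Ψ) = rhoA Ψ :=
  rfl

theorem partialTraceLeft_rhoAB (Ψ : Q3 → ℂ) : partialTraceLeft (rhoAB Ψ) = rhoB Ψ :=
  rfl

theorem rhoAB_productVector (f g k : Fin 2 → ℂ) : rhoAB (productVector f g k)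
    = ((k ⬝ᵥ star k) • vecMulVec f (star f)) ⊗ₖ vecMulVec g (star g) := by
  ext p q
  simp only [rhoAB, productVector, map_mul, dotProduct, Matrix.smul_apply,
    kroneckerMap_apply, vecMulVec_apply, smul_eq_mul, Finset.sum_mul, Pi.star_apply,
    starRingEnd_apply]
  exact Finset.sum_congr rfl fun c _ => by ring

variable {Ψ : Q3 → ℂ}

theorem IsProductVector.exists_rhoAB_eq_kronecker (h : IsProductVector Ψ) :
    ∃ X Y : Matrix (Fin 2) (Fin 2) ℂ,
      X * X = X.trace • X ∧ Y * Y = Y.trace • Y ∧ rhoAB Ψ = X ⊗ₖ Y := by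
  obtain ⟨f, g, k, rfl⟩ := h
  refine ⟨_, _, ?_, vecMulVec_mul_self_eq_trace_smul _ _, rhoAB_productVector f g k⟩
  rw [← smul_vecMulVec]
  exact vecMulVec_mul_self_eq_trace_smul _ _

theorem isDensityMatrix_rhoAB (hΨ : Ψ ∈ unitVectors Q3) : IsDensityMatrix (rhoAB Ψ) := by
  rw [rhoAB_eq_flatten_mul_conjTranspose]
  refine isDensityMatrix_mul_conjTranspose_self (.trans ?_ hΨ)
  simp only [flattenAB, of_apply, Fintype.sum_prod_type]

theorem isDensityMatrix_rhoA (hΨ : Ψ ∈ unitVectors Q3) : IsDensityMatrix (rhoA Ψ) :=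
  (isDensityMatrix_rhoAB hΨ).partialTraceRight

theorem isDensityMatrix_rhoB (hΨ : Ψ ∈ unitVectors Q3) : IsDensityMatrix (rhoB Ψ) :=
  (isDensityMatrix_rhoAB hΨ).partialTraceLeft

end ReducedState

section Phi

variable {n : Type*} [Fintype n]

/-- The amount `1 - Re (Tr X)` by which the trace of `X` falls short of one. It is nonnegative for
each of the products of density matrices whose traces make up `φ_ABC`. -/
def traceDeficit (X : Matrix n n ℂ) : ℝ :=
  1 - X.trace.re

theorem traceDeficit_eq_zero {X : Matrix n n ℂ} (hX : X.trace = 1) : traceDeficit X = 0 := by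
  rw [traceDeficit, hX, Complex.one_re, sub_self]

theorem traceDeficit_nonneg {X : Matrix n n ℂ} (hX : X.trace ≤ 1) : 0 ≤ traceDeficit X :=
  sub_nonneg.2 (Complex.le_def.1 hX).1

variable {Ψ : Q3 → ℂ}

theorem phiABC_eq_sum_traceDeficit (hΨ : Ψ ∈ unitVectors Q3) :
    phiABC Ψ = 8 * traceDeficit (rhoAB Ψ ^ 3)
      + 12 * traceDeficit (rhoAB Ψ ^ 2 * (rhoA Ψ ⊗ₖ (1 : Matrix (Fin 2) (Fin 2) ℂ)))
      + 12 * traceDeficit (rhoAB Ψ ^ 2 * ((1 : Matrix (Fin 2) (Fin 2) ℂ) ⊗ₖ rhoB Ψ))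
      + 12 * traceDeficit (rhoAB Ψ * (rhoA Ψ ⊗ₖ rhoB Ψ))
      + 8 * traceDeficit (rhoA Ψ ^ 3) + 8 * traceDeficit (rhoB Ψ ^ 3)
      + 3 * traceDeficit (rhoA Ψ ^ 2) + 3 * traceDeficit (rhoB Ψ ^ 2)
      + 3 * traceDeficit (rhoAB Ψ ^ 2) := by
  rw [phiABC, trace_cube_two_smul_add_marginals _ (partialTraceRight_rhoAB Ψ)
    (partialTraceLeft_rhoAB Ψ), (isDensityMatrix_rhoA hΨ).trace_eq_one,
    (isDensityMatrix_rhoB hΨ).trace_eq_one]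
  simp only [traceDeficit, Fintype.card_fin, Nat.cast_ofNat, mul_one, one_mul, Complex.add_re,
    Complex.add_im, Complex.mul_re, Complex.re_ofNat, Complex.im_ofNat, zero_mul, sub_zero,
    add_zero]
  ring

theorem purity_deficits_le_phiABC (hΨ : Ψ ∈ unitVectors Q3) :
    3 * traceDeficit (rhoA Ψ ^ 2) + 3 * traceDeficit (rhoB Ψ ^ 2) ≤ phiABC Ψ := by
  have hM := isDensityMatrix_rhoAB hΨ
  have hA := isDensityMatrix_rhoA hΨ
  have hB := isDensityMatrix_rhoB hΨ
  have deficit_sq_mul {Q : Matrix (Fin 2 × Fin 2) (Fin 2 × Fin 2) ℂ} (hQ : (1 - Q).PosSemidef) :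
      0 ≤ traceDeficit (rhoAB Ψ ^ 2 * Q) :=
    traceDeficit_nonneg ((trace_mul_le_trace_of_posSemidef (hM.posSemidef.pow 2) hQ).trans
      (hM.trace_pow_succ_le_one 1))
  have deficit_sq_mul_A :
      0 ≤ traceDeficit (rhoAB Ψ ^ 2 * (rhoA Ψ ⊗ₖ (1 : Matrix (Fin 2) (Fin 2) ℂ))) :=
    deficit_sq_mul (one_sub_kronecker_posSemidef hA.one_sub_posSemidef PosSemidef.one
      (by simpa using PosSemidef.zero))
  have deficit_sq_mul_B :
      0 ≤ traceDeficit (rhoAB Ψ ^ 2 * ((1 : Matrix (Fin 2) (Fin 2) ℂ) ⊗ₖ rhoB Ψ)) :=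
    deficit_sq_mul (one_sub_kronecker_posSemidef (by simpa using PosSemidef.zero)
      hB.posSemidef hB.one_sub_posSemidef)
  have deficit_mul_AB : 0 ≤ traceDeficit (rhoAB Ψ * (rhoA Ψ ⊗ₖ rhoB Ψ)) :=
    traceDeficit_nonneg ((trace_mul_le_trace_of_posSemidef hM.posSemidef
      (hA.kronecker hB).one_sub_posSemidef).trans hM.trace_eq_one.le)
  have deficit_AB_sq := traceDeficit_nonneg (hM.trace_pow_succ_le_one 1)
  have deficit_AB_cube := traceDeficit_nonneg (hM.trace_pow_succ_le_one 2)
  have deficit_A_cube := traceDeficit_nonneg (hA.trace_pow_succ_le_one 2)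
  have deficit_B_cube := traceDeficit_nonneg (hB.trace_pow_succ_le_one 2)
  rw [phiABC_eq_sum_traceDeficit hΨ]
  linarith

theorem phiABC_nonneg (hΨ : Ψ ∈ unitVectors Q3) : 0 ≤ phiABC Ψ := by
  have hA := traceDeficit_nonneg ((isDensityMatrix_rhoA hΨ).trace_pow_succ_le_one 1)
  have hB := traceDeficit_nonneg ((isDensityMatrix_rhoB hΨ).trace_pow_succ_le_one 1)
  linarith [purity_deficits_le_phiABC hΨ]

theorem IsDensityMatrix.trace_pow_succ_eq_one [DecidableEq n] {M : Matrix n n ℂ}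
    (hM : IsDensityMatrix M) {k : ℕ} (h : traceDeficit (M ^ (k + 1)) = 0) :
    (M ^ (k + 1)).trace = 1 :=
  Complex.ext (sub_eq_zero.1 h).symm (Complex.le_def.1 (hM.trace_pow_succ_le_one k)).2

theorem isProductVector_of_phiABC_eq_zero (hΨ : Ψ ∈ unitVectors Q3) (h : phiABC Ψ = 0) :
    IsProductVector Ψ := by
  have hA := isDensityMatrix_rhoA hΨ
  have hB := isDensityMatrix_rhoB hΨ
  have deficit_le := purity_deficits_le_phiABC hΨ
  have deficitA_nonneg := traceDeficit_nonneg (hA.trace_pow_succ_le_one 1)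
  have deficitB_nonneg := traceDeficit_nonneg (hB.trace_pow_succ_le_one 1)
  have pureA : (rhoA Ψ ^ 2).trace = (rhoA Ψ).trace ^ 2 := by
    rw [hA.trace_pow_succ_eq_one (by linarith), hA.trace_eq_one, one_pow]
  have pureB : (rhoB Ψ ^ 2).trace = (rhoB Ψ).trace ^ 2 := by
    rw [hB.trace_pow_succ_eq_one (by linarith), hB.trace_eq_one, one_pow]
  rw [rhoA_eq_flatten_mul_conjTranspose] at pureA
  rw [rhoB_eq_flatten_mul_conjTranspose] at pureB
  exact isProductVector_of_flatten_minors_eq_zero (minor_eq_zero_of_trace_sq_eq pureA)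
    (minor_eq_zero_of_trace_sq_eq pureB)

theorem phiABC_eq_zero_of_isProductVector (hΨ : Ψ ∈ unitVectors Q3) (h : IsProductVector Ψ) :
    phiABC Ψ = 0 := by
  have trM := (isDensityMatrix_rhoAB hΨ).trace_eq_one
  have trA := (isDensityMatrix_rhoA hΨ).trace_eq_one
  have trB := (isDensityMatrix_rhoB hΨ).trace_eq_one
  obtain ⟨X, Y, hX, hY, hXY⟩ := h.exists_rhoAB_eq_kronecker
  have trXY : (X ⊗ₖ Y).trace = 1 := hXY ▸ trM
  have hA : IsIdempotentElem (rhoA Ψ) := by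
    rw [← partialTraceRight_rhoAB, hXY]
    exact isIdempotentElem_partialTraceRight_kronecker trXY hX
  have hB : IsIdempotentElem (rhoB Ψ) := by
    rw [← partialTraceLeft_rhoAB, hXY]
    exact isIdempotentElem_partialTraceLeft_kronecker trXY hY
  have hAB : rhoAB Ψ = rhoA Ψ ⊗ₖ rhoB Ψ := by
    rw [← partialTraceRight_rhoAB, ← partialTraceLeft_rhoAB, hXY]
    exact kronecker_eq_kronecker_marginals trXY
  have hM : IsIdempotentElem (rhoAB Ψ) := by
    rw [hAB, IsIdempotentElem, ← mul_kronecker_mul, hA.eq, hB.eq]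
  have hMA : (rhoAB Ψ * (rhoA Ψ ⊗ₖ (1 : Matrix (Fin 2) (Fin 2) ℂ))).trace = 1 := by
    rw [trace_mul_kronecker_one, partialTraceRight_rhoAB, hA.eq, trA]
  have hMB : (rhoAB Ψ * ((1 : Matrix (Fin 2) (Fin 2) ℂ) ⊗ₖ rhoB Ψ)).trace = 1 := by
    rw [trace_mul_one_kronecker, partialTraceLeft_rhoAB, hB.eq, trB]
  rw [phiABC_eq_sum_traceDeficit hΨ, ← hAB]
  simp only [hM.pow_eq two_ne_zero, hM.pow_eq three_ne_zero, hA.pow_eq two_ne_zero,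
    hA.pow_eq three_ne_zero, hB.pow_eq two_ne_zero, hB.pow_eq three_ne_zero, hM.eq,
    traceDeficit_eq_zero, hMA, hMB, trM, trA, trB, mul_zero, add_zero]

theorem phiABC_eq_zero_iff_isProductVector (hΨ : Ψ ∈ unitVectors Q3) :
    phiABC Ψ = 0 ↔ IsProductVector Ψ :=
  ⟨isProductVector_of_phiABC_eq_zero hΨ, phiABC_eq_zero_of_isProductVector hΨ⟩

theorem continuous_phiABC : Continuous phiABC := by
  have continuous_rhoAB : Continuous rhoAB :=
    continuous_matrix fun p q => by unfold rhoAB; fun_prop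
  have continuous_rhoA : Continuous rhoA :=
    continuous_matrix fun a a' => by unfold rhoA; fun_prop
  have continuous_rhoB : Continuous rhoB :=
    continuous_matrix fun b b' => by unfold rhoB; fun_prop
  have continuous_rhoA_kronecker_one :
      Continuous fun Ψ => rhoA Ψ ⊗ₖ (1 : Matrix (Fin 2) (Fin 2) ℂ) :=
    continuous_matrix fun p q => (continuous_rhoA.matrix_elem _ _).mul continuous_const
  have continuous_one_kronecker_rhoB :
      Continuous fun Ψ => (1 : Matrix (Fin 2) (Fin 2) ℂ) ⊗ₖ rhoB Ψ :=
    continuous_matrix fun p q => continuous_const.mul (continuous_rhoB.matrix_elem _ _)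
  unfold phiABC
  fun_prop

end Phi

section ConvexRoof

variable {n : Type*}

/-- The density matrix `|ψ⟩⟨ψ|` of the pure state with state vector `ψ`. -/
def pureState (ψ : n → ℂ) : Matrix n n ℂ := vecMulVec ψ (star ψ)

theorem continuous_pureState : Continuous (pureState (n := n)) :=
  continuous_id.matrix_vecMulVec continuous_star

variable [Fintype n]

theorem sum_eigenvalues_smul_pureState_eigenvectorBasis [DecidableEq n] {ρ : Matrix n n ℂ}
    (hρ : ρ.IsHermitian) :
    ∑ i, hρ.eigenvalues i • pureState (hρ.eigenvectorBasis i).ofLp = ρ := by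
  conv_rhs => rw [hρ.spectral_theorem, Unitary.conjStarAlgAut_apply]
  ext a b
  rw [Matrix.mul_apply, Matrix.sum_apply]
  refine Finset.sum_congr rfl fun i _ => ?_
  simp only [Matrix.mul_diagonal, pureState, Matrix.smul_apply, vecMulVec_apply, Pi.star_apply,
    star_apply, hρ.eigenvectorUnitary_apply, Function.comp_apply, Complex.coe_algebraMap,
    Complex.real_smul]
  ring

theorem eigenvectorBasis_mem_unitVectors [DecidableEq n] {ρ : Matrix n n ℂ}
    (hρ : ρ.IsHermitian) (i : n) : (hρ.eigenvectorBasis i).ofLp ∈ unitVectors n := by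
  rw [unitVectors, Set.mem_ofPred_eq, ← EuclideanSpace.norm_sq_eq, OrthonormalBasis.norm_eq_one,
    one_pow]

theorem IsDensityMatrix.mem_convexHull_pureState {ρ : Matrix n n ℂ} (hρ : IsDensityMatrix ρ) :
    ρ ∈ convexHull ℝ (pureState '' unitVectors n) := by
  classical
  have hH := hρ.posSemidef.isHermitian
  exact mem_convexHull_of_exists_fintype hH.eigenvalues _ hρ.posSemidef.eigenvalues_nonneg
    hρ.sum_eigenvalues
    (fun i => Set.mem_image_of_mem pureState (eigenvectorBasis_mem_unitVectors hH i))
    (sum_eigenvalues_smul_pureState_eigenvectorBasis hH)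

/-- The graph of `f` over the pure states, as the set of pairs `(|ψ⟩⟨ψ|, f ψ)` with `ψ` a unit
vector; the convex roof of `f` is the lower boundary of its convex hull. -/
def pureStateGraph (f : (n → ℂ) → ℝ) : Set (Matrix n n ℂ × ℝ) :=
  (fun ψ => (pureState ψ, f ψ)) '' unitVectors n

theorem isCompact_pureStateGraph {f : (n → ℂ) → ℝ} (hf : ContinuousOn f (unitVectors n)) :
    IsCompact (pureStateGraph f) :=
  isCompact_unitVectors.image_of_continuousOn (continuous_pureState.continuousOn.prodMk hf)

theorem snd_nonneg_of_mem_pureStateGraph {f : (n → ℂ) → ℝ} (hf : ∀ ψ ∈ unitVectors n, 0 ≤ f ψ) :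
    ∀ p ∈ pureStateGraph f, 0 ≤ p.2 := by
  rintro _ ⟨ψ, hψ, rfl⟩
  exact hf ψ hψ

theorem IsDensityMatrix.exists_mem_convexHull_pureStateGraph {ρ : Matrix n n ℂ}
    (hρ : IsDensityMatrix ρ) (f : (n → ℂ) → ℝ) : ∃ x, (ρ, x) ∈ convexHull ℝ (pureStateGraph f) := by
  have image_fst : LinearMap.fst ℝ (Matrix n n ℂ) ℝ '' pureStateGraph f
      = pureState '' unitVectors n := Set.image_image _ _ _
  have := hρ.mem_convexHull_pureState
  rw [← image_fst, ← LinearMap.image_convexHull] at this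
  obtain ⟨⟨_, x⟩, hx, rfl⟩ := this
  exact ⟨x, hx⟩

theorem convexRoof_eq_sInf_convexHull_pureStateGraph (f : (Q3 → ℂ) → ℝ) (ρ : Matrix Q3 Q3 ℂ) :
    convexRoof f ρ = sInf {x | (ρ, x) ∈ convexHull ℝ (pureStateGraph f)} := by
  rw [convexRoof]
  congr 1
  ext x
  constructor
  · rintro ⟨m, p, ψ, hp, hp1, hψ, rfl, rfl⟩
    refine mem_convexHull_of_exists_fintype p (fun ℓ => (pureState (ψ ℓ), f (ψ ℓ)))
      (fun ℓ => (hp ℓ).le) hp1 (fun ℓ => ⟨ψ ℓ, hψ ℓ, rfl⟩) (Prod.ext ?_ ?_)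
    · simp only [Prod.fst_sum, Prod.smul_mk, Complex.coe_smul, pureState]
    · simp only [Prod.snd_sum, Prod.smul_mk, smul_eq_mul]
  · intro hx
    obtain ⟨m, -, p, z, hp, hp1, hz, hsum⟩ := exists_fin_of_mem_convexHull hx
    choose ψ hψ hψz using hz
    simp only [← hψz] at hsum
    refine ⟨m, p, ψ, hp, hp1, hψ, ?_, ?_⟩
    · simpa only [Prod.fst_sum, Prod.smul_mk, Complex.coe_smul, pureState]
        using (congrArg Prod.fst hsum).symm
    · simpa only [Prod.snd_sum, Prod.smul_mk, smul_eq_mul] using (congrArg Prod.snd hsum).symm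

theorem isCompact_setOf_mem_convexHull_pureStateGraph {f : (n → ℂ) → ℝ}
    (hf : ContinuousOn f (unitVectors n)) (ρ : Matrix n n ℂ) :
    IsCompact {x | (ρ, x) ∈ convexHull ℝ (pureStateGraph f)} := by
  have hcompact := isCompact_convexHull (isCompact_pureStateGraph hf)
  exact (hcompact.image continuous_snd).of_isClosed_subset
    (hcompact.isClosed.preimage (Continuous.prodMk_right ρ)) fun x hx => ⟨(ρ, x), hx, rfl⟩

theorem mk_convexRoof_mem_convexHull_pureStateGraph {f : (Q3 → ℂ) → ℝ}
    (hf : ContinuousOn f (unitVectors Q3)) {ρ : Matrix Q3 Q3 ℂ} (hρ : IsDensityMatrix ρ) :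
    (ρ, convexRoof f ρ) ∈ convexHull ℝ (pureStateGraph f) := by
  rw [convexRoof_eq_sInf_convexHull_pureStateGraph]
  exact (isCompact_setOf_mem_convexHull_pureStateGraph hf ρ).sInf_mem
    (hρ.exists_mem_convexHull_pureStateGraph f)

theorem convexRoof_eq_zero_iff {f : (Q3 → ℂ) → ℝ} (hf : ContinuousOn f (unitVectors Q3))
    (hf0 : ∀ ψ ∈ unitVectors Q3, 0 ≤ f ψ) {ρ : Matrix Q3 Q3 ℂ} (hρ : IsDensityMatrix ρ) :
    convexRoof f ρ = 0 ↔ ρ ∈ convexHull ℝ (pureState '' {ψ ∈ unitVectors Q3 | f ψ = 0}) := by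
  have snd_nonneg := snd_nonneg_of_mem_pureStateGraph hf0
  have attained : convexRoof f ρ = 0 ↔ (ρ, 0) ∈ convexHull ℝ (pureStateGraph f) := by
    refine ⟨fun h => h ▸ mk_convexRoof_mem_convexHull_pureStateGraph hf hρ, fun h => ?_⟩
    rw [convexRoof_eq_sInf_convexHull_pureStateGraph]
    exact IsLeast.csInf_eq ⟨h, fun x hx => snd_nonneg_of_mem_convexHull snd_nonneg hx⟩
  have zero_section : {M | (M, 0) ∈ pureStateGraph f}
      = pureState '' {ψ ∈ unitVectors Q3 | f ψ = 0} := by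
    ext M
    simp only [pureStateGraph, Set.mem_image, Prod.mk.injEq, and_comm, and_assoc,
      Set.mem_ofPred_eq]
  rw [attained, mk_zero_mem_convexHull_iff snd_nonneg, zero_section]

theorem fullySep3_iff_mem_convexHull {ρ : Matrix Q3 Q3 ℂ} : FullySep3 ρ ↔
    ρ ∈ convexHull ℝ (pureState '' {ψ ∈ unitVectors Q3 | IsProductVector ψ}) := by
  constructor
  · rintro ⟨m, p, f, g, k, hp, hp1, hunit, rfl⟩
    refine mem_convexHull_of_exists_fintype p
      (fun j => pureState (productVector (f j) (g j) (k j))) hp hp1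
      (fun j => ⟨_, ⟨hunit j, _, _, _, rfl⟩, rfl⟩) ?_
    simp only [Complex.coe_smul]
    rfl
  · intro hρ
    obtain ⟨m, -, p, z, hp, hp1, hz, rfl⟩ := exists_fin_of_mem_convexHull hρ
    choose ψ hψ hψz using hz
    choose f g k hprod using fun j => (hψ j).2
    have hψ' (j : Fin m) := hprod j ▸ (hψ j).1
    refine ⟨m, p, f, g, k, fun j => (hp j).le, hp1, hψ', ?_⟩
    simp only [← hψz, hprod, Complex.coe_smul]
    rfl

end ConvexRoof

theorem convexRoof_phiABC_eq_zero_iff_fullySep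
    (ρ : Matrix Q3 Q3 ℂ) (hρ : ρ.PosSemidef) (htr : ρ.trace = 1) :
    convexRoof phiABC ρ = 0 ↔ FullySep3 ρ := by
  have zeros_eq : {Ψ ∈ unitVectors Q3 | phiABC Ψ = 0} = {Ψ ∈ unitVectors Q3 | IsProductVector Ψ} :=
    Set.ext fun _ => and_congr_right phiABC_eq_zero_iff_isProductVector
  rw [convexRoof_eq_zero_iff continuous_phiABC.continuousOn (fun _ => phiABC_nonneg) ⟨hρ, htr⟩,
    fullySep3_iff_mem_convexHull, zeros_eq]

end
end

section
/- For every three-qubit pure state Ψ (unit vector in ℂ²⊗ℂ²⊗ℂ²), φ_ABC(Ψ) ≤ 99/2, and equality holds if and only if Ψ is LU-equivalent to the GHZ-state (|000⟩+|111⟩)/√2. -/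
open scoped BigOperators Kronecker
open Matrix

noncomputable section

/-- `LUequiv Ψ Ψ'` : `Ψ' = (U_A ⊗ U_B ⊗ U_C) Ψ` for some `2×2` unitaries. -/
def LUequiv (Ψ Ψ' : Q3 → ℂ) : Prop :=
  ∃ UA UB UC : Matrix (Fin 2) (Fin 2) ℂ,
    UA * UAᴴ = 1 ∧ UAᴴ * UA = 1 ∧
    UB * UBᴴ = 1 ∧ UBᴴ * UB = 1 ∧
    UC * UCᴴ = 1 ∧ UCᴴ * UC = 1 ∧
    ∀ v : Q3, Ψ' v = ∑ w : Q3, UA v.1 w.1 * UB v.2.1 w.2.1 * UC v.2.2 w.2.2 * Ψ w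

/-- The three-qubit GHZ-state. -/
def GHZstate : Q3 → ℂ := fun v =>
  if v = (0, 0, 0) ∨ v = (1, 1, 1)
    then ((Real.sqrt 2 : ℝ) : ℂ)⁻¹ else 0

/-!
Let `F = (σ_y ⊗ σ_y) Rᵀ (σ_y ⊗ σ_y)` be Wootters' spin flip of `R = ρ_AB`. The flip is a
trace-preserving linear anti-automorphism, and `F = R - (ρ_A ⊗ 1 + 1 ⊗ ρ_B) + 1`, so the cubed
matrix in `φ_ABC` is `1 + 3 R - F`. Expanding the cube, using that `ρ_AB` and `ρ_C` have the same
power traces, and applying Newton's identity to the `2 × 2` matrix `ρ_C` gives, with `Z = R - F`,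
`φ_ABC = 99/2 - 27 tr (ρ_C - 1/2)² - 9 tr Z² - 18 tr (R Z²)`.
The subtracted terms are nonnegative, and they all vanish iff `ρ_A = ρ_B = ρ_C = 1/2`.

A state with these marginals is locally equivalent to the GHZ-state. Slice its tensor along `A`: the
pencil spanned by the two slices contains a singular matrix, so after a unitary change of basis of
`A` the first slice `P` is singular. The marginals of `√2 Ψ` give `P Pᴴ + Q Qᴴ = 1` with
`tr (P Pᴴ) = 1`, which forces the second slice `Q` to be singular too. Hence `P` and `Q` are
products of unit vectors, and `ρ_B` and `ρ_C` make these vectors orthonormal bases.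
-/

namespace ThreeQubit

section TraceIdentities

variable {K : Type*} [CommRing K] {m n : Type*} [Fintype m] [Fintype n]

lemma trace_add_sq [DecidableEq n] (X Y : Matrix n n K) :
    ((X + Y) ^ 2).trace = (X ^ 2).trace + 2 * (X * Y).trace + (Y ^ 2).trace := by
  have expand : (X + Y) ^ 2 = X ^ 2 + X * Y + Y * X + Y ^ 2 := by noncomm_ring
  rw [expand, trace_add, trace_add, trace_add, trace_mul_comm Y X]
  ring

lemma trace_add_pow_three [DecidableEq n] (X Y : Matrix n n K) :
    ((X + Y) ^ 3).trace
      = (X ^ 3).trace + 3 * (X ^ 2 * Y).trace + 3 * (X * Y ^ 2).trace + (Y ^ 3).trace := by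
  have expand : (X + Y) ^ 3 = X ^ 3 + X ^ 2 * Y + X * Y * X + Y * X ^ 2
      + X * Y ^ 2 + Y * X * Y + Y ^ 2 * X + Y ^ 3 := by noncomm_ring
  have hXYX : (X * Y * X).trace = (X ^ 2 * Y).trace := by
    rw [trace_mul_comm, sq, Matrix.mul_assoc]
  have hYXY : (Y * X * Y).trace = (X * Y ^ 2).trace := by
    rw [Matrix.mul_assoc, trace_mul_comm, sq, Matrix.mul_assoc]
  simp only [expand, trace_add, hXYX, hYXY, trace_mul_comm Y (X ^ 2), trace_mul_comm (Y ^ 2) X]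
  ring

lemma trace_mul_pow_comm [DecidableEq m] [DecidableEq n] (A : Matrix m n K) (B : Matrix n m K)
    (k : ℕ) : ((A * B) ^ (k + 1)).trace = ((B * A) ^ (k + 1)).trace := by
  have shift : ∀ j : ℕ, (A * B) ^ j * A = A * (B * A) ^ j := fun j => by
    induction j with
    | zero => simp
    | succ j ih => rw [pow_succ', Matrix.mul_assoc, ih, pow_succ']; simp only [Matrix.mul_assoc]
  rw [pow_succ, ← Matrix.mul_assoc, shift, trace_mul_comm, ← Matrix.mul_assoc, pow_succ']

lemma two_mul_trace_pow_three_fin_two (M : Matrix (Fin 2) (Fin 2) K) :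
    2 * (M ^ 3).trace = 3 * M.trace * (M ^ 2).trace - M.trace ^ 3 := by
  simp only [pow_succ, pow_zero, one_mul, trace_fin_two, mul_apply, Fin.sum_univ_two]
  ring

lemma det_one_sub_fin_two (M : Matrix (Fin 2) (Fin 2) K) :
    (1 - M).det = 1 - M.trace + M.det := by
  simp only [det_fin_two, trace_fin_two, Matrix.sub_apply, one_apply_eq,
    one_apply_ne zero_ne_one, one_apply_ne one_ne_zero]
  ring

end TraceIdentities

section SpinFlip

variable {K : Type*} [CommRing K]

/-- The partial trace of a bipartite matrix over its second factor. -/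
def traceRight {m n : Type*} [Fintype n] (M : Matrix (m × n) (m × n) K) : Matrix m m K :=
  of fun a a' => ∑ b, M (a, b) (a', b)

/-- The partial trace of a bipartite matrix over its first factor. -/
def traceLeft {m n : Type*} [Fintype m] (M : Matrix (m × n) (m × n) K) : Matrix n n K :=
  of fun b b' => ∑ a, M (a, b) (a, b')

lemma trace_traceRight {m n : Type*} [Fintype m] [Fintype n] (M : Matrix (m × n) (m × n) K) :
    (traceRight M).trace = M.trace :=
  (Fintype.sum_prod_type fun p => M p p).symm

lemma trace_traceLeft {m n : Type*} [Fintype m] [Fintype n] (M : Matrix (m × n) (m × n) K) :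
    (traceLeft M).trace = M.trace :=
  (Fintype.sum_prod_type_right fun p => M p p).symm

lemma traceRight_add {m n : Type*} [Fintype n] (M N : Matrix (m × n) (m × n) K) :
    traceRight (M + N) = traceRight M + traceRight N := by
  ext a a'
  exact Finset.sum_add_distrib

lemma traceLeft_add {m n : Type*} [Fintype m] (M N : Matrix (m × n) (m × n) K) :
    traceLeft (M + N) = traceLeft M + traceLeft N := by
  ext b b'
  exact Finset.sum_add_distrib

lemma traceRight_kronecker {m n : Type*} [Fintype n] (X : Matrix m m K) (Y : Matrix n n K) :
    traceRight (X ⊗ₖ Y) = Y.trace • X := by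
  ext a a'
  simp [traceRight, trace, Finset.mul_sum, mul_comm]

lemma traceLeft_kronecker {m n : Type*} [Fintype m] (X : Matrix m m K) (Y : Matrix n n K) :
    traceLeft (X ⊗ₖ Y) = X.trace • Y := by
  ext b b'
  simp [traceLeft, trace, Finset.sum_mul]

/-- The matrix `σ_y ⊗ σ_y`, written as `-(J ⊗ J)` with `J = i σ_y` so that its entries lie in
any commutative ring. -/
def pauliYY (K : Type*) [CommRing K] : Matrix (Fin 2 × Fin 2) (Fin 2 × Fin 2) K :=
  -(!![0, 1; -1, 0] ⊗ₖ !![0, 1; -1, 0])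

/-- Wootters' spin flip `M ↦ (σ_y ⊗ σ_y) Mᵀ (σ_y ⊗ σ_y)` of a two-qubit matrix. It agrees with
the usual one, in which `Mᵀ` is the complex conjugate, on Hermitian matrices, and is linear. -/
def spinFlip (M : Matrix (Fin 2 × Fin 2) (Fin 2 × Fin 2) K) :
    Matrix (Fin 2 × Fin 2) (Fin 2 × Fin 2) K :=
  pauliYY K * Mᵀ * pauliYY K

lemma pauliYY_mul_self : pauliYY K * pauliYY K = 1 := by
  have hJ : !![0, 1; -1, 0] * !![0, 1; -1, 0] = (-1 : K) • (1 : Matrix (Fin 2) (Fin 2) K) := by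
    simp [one_fin_two]
  rw [pauliYY, neg_mul_neg, ← mul_kronecker_mul, hJ, smul_kronecker, kronecker_smul, smul_smul,
    one_kronecker_one, neg_one_mul, neg_neg, one_smul]

lemma transpose_pauliYY : (pauliYY K)ᵀ = pauliYY K := by
  have hJ : (!![0, 1; -1, 0] : Matrix (Fin 2) (Fin 2) K)ᵀ = (-1 : K) • !![0, 1; -1, 0] := by
    ext i j
    fin_cases i <;> fin_cases j <;> simp
  rw [pauliYY, transpose_neg, ← kroneckerMap_transpose, hJ, smul_kronecker, kronecker_smul,
    smul_smul, neg_one_mul, neg_neg, one_smul]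

lemma isHermitian_pauliYY [StarRing K] : (pauliYY K).IsHermitian := by
  have star_entry : ∀ p q, star (pauliYY K p q) = pauliYY K p q := by
    rintro ⟨a, b⟩ ⟨a', b'⟩
    fin_cases a <;> fin_cases b <;> fin_cases a' <;> fin_cases b' <;> simp [pauliYY]
  exact IsHermitian.ext fun p q => by
    rw [star_entry, ← transpose_apply (pauliYY K), transpose_pauliYY]

lemma isHermitian_spinFlip [StarRing K] {M : Matrix (Fin 2 × Fin 2) (Fin 2 × Fin 2) K}
    (hM : M.IsHermitian) : (spinFlip M).IsHermitian := by
  rw [IsHermitian, spinFlip, conjTranspose_mul, conjTranspose_mul, isHermitian_pauliYY.eq,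
    hM.transpose.eq, Matrix.mul_assoc]

lemma spinFlip_mul (M N : Matrix (Fin 2 × Fin 2) (Fin 2 × Fin 2) K) :
    spinFlip (M * N) = spinFlip N * spinFlip M := by
  calc spinFlip (M * N)
      = pauliYY K * Nᵀ * 1 * Mᵀ * pauliYY K := by
        rw [spinFlip, transpose_mul, mul_one, ← Matrix.mul_assoc]
    _ = spinFlip N * spinFlip M := by
        simp only [← pauliYY_mul_self, spinFlip, Matrix.mul_assoc]

lemma trace_spinFlip (M : Matrix (Fin 2 × Fin 2) (Fin 2 × Fin 2) K) :
    (spinFlip M).trace = M.trace := by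
  rw [spinFlip, trace_mul_comm, ← Matrix.mul_assoc, pauliYY_mul_self, Matrix.one_mul,
    trace_transpose]

lemma spinFlip_spinFlip (M : Matrix (Fin 2 × Fin 2) (Fin 2 × Fin 2) K) :
    spinFlip (spinFlip M) = M := by
  calc spinFlip (spinFlip M)
      = pauliYY K * pauliYY K * M * (pauliYY K * pauliYY K) := by
        simp only [spinFlip, transpose_mul, transpose_pauliYY, transpose_transpose,
          Matrix.mul_assoc]
    _ = M := by rw [pauliYY_mul_self, Matrix.one_mul, Matrix.mul_one]

lemma spinFlip_pow (M : Matrix (Fin 2 × Fin 2) (Fin 2 × Fin 2) K) (k : ℕ) :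
    spinFlip (M ^ k) = spinFlip M ^ k := by
  induction k with
  | zero => rw [pow_zero, pow_zero, spinFlip, transpose_one, Matrix.mul_one, pauliYY_mul_self]
  | succ k ih => rw [pow_succ, spinFlip_mul, ih, pow_succ']

lemma trace_mul_spinFlip (M N : Matrix (Fin 2 × Fin 2) (Fin 2 × Fin 2) K) :
    (M * spinFlip N).trace = (spinFlip M * N).trace := by
  rw [← trace_spinFlip, spinFlip_mul, spinFlip_spinFlip, trace_mul_comm]

lemma spinFlip_eq (M : Matrix (Fin 2 × Fin 2) (Fin 2 × Fin 2) K) :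
    spinFlip M = M - (traceRight M ⊗ₖ (1 : Matrix (Fin 2) (Fin 2) K)
      + (1 : Matrix (Fin 2) (Fin 2) K) ⊗ₖ traceLeft M) + M.trace • 1 := by
  ext ⟨a, b⟩ ⟨a', b'⟩
  fin_cases a <;> fin_cases b <;> fin_cases a' <;> fin_cases b' <;>
    simp [spinFlip, pauliYY, traceRight, traceLeft, mul_apply, Fintype.sum_prod_type, trace,
      one_apply] <;> ring

lemma trace_pow_three_add_marginals (R : Matrix (Fin 2 × Fin 2) (Fin 2 × Fin 2) K)
    (hR : R.trace = 1) :
    (((2 : K) • R + traceRight R ⊗ₖ (1 : Matrix (Fin 2) (Fin 2) K)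
        + (1 : Matrix (Fin 2) (Fin 2) K) ⊗ₖ traceLeft R) ^ 3).trace
      = 10 + 12 * (R ^ 2).trace + 8 * (R ^ 3).trace + 9 * ((R - spinFlip R) ^ 2).trace
        + 18 * (R * (R - spinFlip R) ^ 2).trace := by
  set F := spinFlip R with hF
  have shape : (2 : K) • R + traceRight R ⊗ₖ (1 : Matrix (Fin 2) (Fin 2) K)
      + (1 : Matrix (Fin 2) (Fin 2) K) ⊗ₖ traceLeft R = 1 + ((3 : K) • R + (-1 : K) • F) := by
    rw [hF, spinFlip_eq, hR]
    module
  have trace_F : F.trace = 1 := by rw [hF, trace_spinFlip, hR]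
  have trace_F_pow : ∀ k, (F ^ k).trace = (R ^ k).trace := fun k => by
    rw [hF, ← spinFlip_pow, trace_spinFlip]
  have trace_RF_sq : (R * F ^ 2).trace = (R ^ 2 * F).trace := by
    rw [hF, ← spinFlip_pow, trace_mul_spinFlip, trace_mul_comm]
  have defect_sq : ((R - F) ^ 2).trace = 2 * (R ^ 2).trace - 2 * (R * F).trace := by
    rw [sub_eq_add_neg, trace_add_sq, neg_sq, trace_F_pow, Matrix.mul_neg, trace_neg]
    ring
  have mul_defect_sq : (R * (R - F) ^ 2).trace = (R ^ 3).trace - (R ^ 2 * F).trace := by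
    have expand : R * (R - F) ^ 2 = R ^ 3 - R ^ 2 * F - R * F * R + R * F ^ 2 := by noncomm_ring
    rw [expand, trace_add, trace_sub, trace_sub, trace_RF_sq, trace_mul_comm (R * F) R,
      ← Matrix.mul_assoc, ← sq]
    ring
  rw [shape, defect_sq, mul_defect_sq, trace_add_pow_three, one_pow, one_pow, Matrix.one_mul,
    Matrix.one_mul, trace_add_sq, trace_add_pow_three]
  simp only [smul_pow, Matrix.smul_mul, Matrix.mul_smul, trace_add, trace_smul, trace_one,
    smul_eq_mul, trace_F_pow, trace_RF_sq, hR, trace_F, Fintype.card_prod, Fintype.card_fin]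
  push_cast
  ring

end SpinFlip

lemma spinFlip_eq_self_iff {K : Type*} [Field K] [NeZero (2 : K)]
    (R : Matrix (Fin 2 × Fin 2) (Fin 2 × Fin 2) K) :
    spinFlip R = R ↔ traceRight R = (R.trace / 2) • 1 ∧ traceLeft R = (R.trace / 2) • 1 := by
  rw [spinFlip_eq, sub_add, sub_eq_self, sub_eq_zero]
  constructor
  · intro h
    rw [← one_kronecker_one, ← smul_kronecker] at h
    have hA := congrArg traceRight h
    have hB := congrArg traceLeft h
    simp only [traceRight_add, traceRight_kronecker, trace_traceLeft] at hA
    simp only [traceLeft_add, traceLeft_kronecker, trace_traceRight] at hB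
    simp only [trace_smul, trace_one, Fintype.card_fin, Nat.cast_ofNat, smul_eq_mul] at hA hB
    have half {X : Matrix (Fin 2) (Fin 2) K} (hX : (2 : K) • X = R.trace • 1) :
        X = (R.trace / 2) • 1 := by
      rw [div_eq_inv_mul, mul_smul, ← hX, inv_smul_smul₀ (NeZero.ne _)]
    exact ⟨half (by linear_combination (norm := module) hA),
      half (by linear_combination (norm := module) hB)⟩
  · rintro ⟨hA, hB⟩
    rw [hA, hB, smul_kronecker, kronecker_smul, one_kronecker_one, ← add_smul, add_halves]

section Positivity

open scoped ComplexOrder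

variable {n : Type*} [Fintype n]

lemma re_trace_mul_sq_nonneg [DecidableEq n] {R Z : Matrix n n ℂ} (hR : R.PosSemidef)
    (hZ : Z.IsHermitian) : 0 ≤ (R * Z ^ 2).trace.re := by
  have cyclic : (R * Z ^ 2).trace = (Z * R * Zᴴ).trace := by
    rw [hZ.eq, trace_mul_comm, sq, Matrix.mul_assoc, trace_mul_comm]
  rw [cyclic]
  exact (Complex.nonneg_iff.mp (hR.mul_mul_conjTranspose_same Z).trace_nonneg).1

lemma re_trace_sq_nonneg [DecidableEq n] {Z : Matrix n n ℂ} (hZ : Z.IsHermitian) :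
    0 ≤ (Z ^ 2).trace.re := by
  simpa only [Matrix.one_mul] using re_trace_mul_sq_nonneg PosSemidef.one hZ

lemma eq_zero_of_re_trace_sq_eq_zero [DecidableEq n] {Z : Matrix n n ℂ} (hZ : Z.IsHermitian)
    (h : (Z ^ 2).trace.re = 0) : Z = 0 := by
  have nonneg := (posSemidef_conjTranspose_mul_self Z).trace_nonneg
  rw [hZ.eq, ← sq] at nonneg
  rw [← trace_conjTranspose_mul_self_eq_zero_iff, hZ.eq, ← sq]
  exact Complex.ext h (Complex.nonneg_iff.mp nonneg).2.symm

end Positivity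

/-- Single-party reduced density matrix `ρ_C`. -/
def rhoC (Ψ : Q3 → ℂ) : Matrix (Fin 2) (Fin 2) ℂ :=
  fun c c' => ∑ a : Fin 2, ∑ b : Fin 2, Ψ (a, b, c) * (starRingEnd ℂ) (Ψ (a, b, c'))

/-- The amplitudes of `Ψ` as the `4 × 2` matrix of the bipartition `AB | C`. -/
def amplitudeMatrix (Ψ : Q3 → ℂ) : Matrix (Fin 2 × Fin 2) (Fin 2) ℂ :=
  of fun p c => Ψ (p.1, p.2, c)

section ReducedDensityMatrices

variable (Ψ : Q3 → ℂ)

lemma traceRight_rhoAB : traceRight (rhoAB Ψ) = rhoA Ψ := rfl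

lemma traceLeft_rhoAB : traceLeft (rhoAB Ψ) = rhoB Ψ := rfl

lemma rhoAB_eq_mul_conjTranspose :
    rhoAB Ψ = amplitudeMatrix Ψ * (amplitudeMatrix Ψ)ᴴ := by
  ext p q
  simp [rhoAB, amplitudeMatrix, mul_apply]

lemma rhoC_eq_transpose :
    rhoC Ψ = ((amplitudeMatrix Ψ)ᴴ * amplitudeMatrix Ψ)ᵀ := by
  ext c c'
  simp [rhoC, amplitudeMatrix, mul_apply, Fintype.sum_prod_type, mul_comm]

lemma isHermitian_rhoC : (rhoC Ψ).IsHermitian := by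
  rw [rhoC_eq_transpose]
  exact (isHermitian_conjTranspose_mul_self _).transpose

open scoped ComplexOrder in
lemma posSemidef_rhoAB : (rhoAB Ψ).PosSemidef := by
  rw [rhoAB_eq_mul_conjTranspose]
  exact posSemidef_self_mul_conjTranspose _

lemma isHermitian_rhoAB : (rhoAB Ψ).IsHermitian := by
  rw [rhoAB_eq_mul_conjTranspose]
  exact isHermitian_mul_conjTranspose_self _

lemma trace_rhoAB_pow (k : ℕ) : (rhoAB Ψ ^ (k + 1)).trace = (rhoC Ψ ^ (k + 1)).trace := by
  rw [rhoAB_eq_mul_conjTranspose, rhoC_eq_transpose, trace_mul_pow_comm, ← transpose_pow,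
    trace_transpose]

lemma trace_rhoC (hΨ : ∑ v : Q3, ‖Ψ v‖ ^ 2 = 1) : (rhoC Ψ).trace = 1 := by
  have hΨ' : ∑ v : Q3, Ψ v * (starRingEnd ℂ) (Ψ v) = 1 := by
    simp_rw [Complex.mul_conj']
    exact_mod_cast hΨ
  rw [← hΨ']
  simp only [trace_fin_two, rhoC, Fintype.sum_prod_type, Fin.sum_univ_two]
  ring

lemma trace_rhoAB (hΨ : ∑ v : Q3, ‖Ψ v‖ ^ 2 = 1) : (rhoAB Ψ).trace = 1 := by
  simpa only [zero_add, pow_one, trace_rhoC Ψ hΨ] using trace_rhoAB_pow Ψ 0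

lemma trace_rhoC_sub_half_sq (hΨ : ∑ v : Q3, ‖Ψ v‖ ^ 2 = 1) :
    ((rhoC Ψ - (1 / 2 : ℂ) • 1) ^ 2).trace = (rhoC Ψ ^ 2).trace - 1 / 2 := by
  rw [sub_eq_add_neg, ← neg_smul, trace_add_sq, smul_pow, one_pow, Matrix.mul_smul, Matrix.mul_one,
    trace_smul, trace_smul, trace_rhoC Ψ hΨ, trace_one, smul_eq_mul, smul_eq_mul, Fintype.card_fin]
  ring

theorem phiABC_eq (hΨ : ∑ v : Q3, ‖Ψ v‖ ^ 2 = 1) :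
    phiABC Ψ = 99 / 2
      - 27 * ((rhoC Ψ - (1 / 2 : ℂ) • 1) ^ 2).trace.re
      - 9 * ((rhoAB Ψ - spinFlip (rhoAB Ψ)) ^ 2).trace.re
      - 18 * (rhoAB Ψ * (rhoAB Ψ - spinFlip (rhoAB Ψ)) ^ 2).trace.re := by
  have cube := trace_pow_three_add_marginals (rhoAB Ψ) (trace_rhoAB Ψ hΨ)
  have newton := two_mul_trace_pow_three_fin_two (rhoC Ψ)
  rw [trace_rhoC Ψ hΨ, mul_one, one_pow] at newton
  rw [traceRight_rhoAB, traceLeft_rhoAB, trace_rhoAB_pow Ψ 1, trace_rhoAB_pow Ψ 2] at cube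
  have newton_re := congrArg Complex.re newton
  have cube_re := congrArg Complex.re cube
  have purity_re := congrArg Complex.re (trace_rhoC_sub_half_sq Ψ hΨ)
  simp only [Complex.add_re, Complex.sub_re, Complex.mul_re, Complex.re_ofNat, Complex.im_ofNat,
    Complex.one_re, Complex.div_ofNat_re, zero_mul, sub_zero] at newton_re cube_re purity_re
  rw [phiABC, cube_re, trace_rhoAB_pow Ψ 1, purity_re]
  linarith

end ReducedDensityMatrices

section UnitVectors

lemma exists_smul_dotProduct_star_eq_one {ι : Type*} [Fintype ι] {x : ι → ℂ} (hx : x ≠ 0) :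
    ∃ c : ℂ, c ≠ 0 ∧ (c • x) ⬝ᵥ star (c • x) = 1 := by
  open scoped ComplexOrder in
  obtain ⟨r, hr, hrx : (r : ℂ) = x ⬝ᵥ star x⟩ :=
    RCLike.pos_iff_exists_ofReal.mp (dotProduct_self_star_pos_iff.mpr hx)
  refine ⟨((√r)⁻¹ : ℝ), by simpa using (Real.sqrt_pos.mpr hr).ne', ?_⟩
  rw [star_smul, smul_dotProduct, dotProduct_smul, ← hrx, Complex.star_def, Complex.conj_ofReal,
    smul_eq_mul, smul_eq_mul]
  have normalise : (√r)⁻¹ * ((√r)⁻¹ * r) = 1 := by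
    field_simp
    exact (Real.sq_sqrt hr.le).symm
  exact_mod_cast congrArg Complex.ofReal normalise

lemma exists_mem_unitaryGroup_row_eq {α : Type*} [CommRing α] [StarRing α] {x : Fin 2 → α}
    (hx : x ⬝ᵥ star x = 1) : ∃ V ∈ unitaryGroup (Fin 2) α, V 0 = x := by
  refine ⟨!![x 0, x 1; -star (x 1), star (x 0)], mem_unitaryGroup_iff.mpr ?_, ?_⟩
  · simp only [dotProduct, Fin.sum_univ_two, Pi.star_apply] at hx
    ext i j
    fin_cases i <;> fin_cases j
    · simpa [mul_apply] using hx
    · simp [mul_apply, mul_comm]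
    · simp [mul_apply, mul_comm]
    · simpa [mul_apply, mul_comm, add_comm] using hx
  · ext i
    fin_cases i <;> rfl

lemma exists_eq_vecMulVec_of_det_eq_zero {K : Type*} [Field K] {P : Matrix (Fin 2) (Fin 2) K}
    (hP : P.det = 0) : ∃ x y, P = vecMulVec x y := by
  obtain ⟨v, hv, hvP⟩ := exists_vecMul_eq_zero_iff.mpr hP
  have rows : ∀ j, v 0 * P 0 j + v 1 * P 1 j = 0 := fun j => by
    simpa [vecMul, dotProduct] using congrFun hvP j
  by_cases h0 : v 0 = 0
  · have h1 : v 1 ≠ 0 := fun h1 => hv <| by ext i; fin_cases i <;> assumption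
    have row_one : P 1 = 0 := funext fun j => by simpa [h0, h1] using rows j
    refine ⟨![1, 0], P 0, ?_⟩
    ext i j
    fin_cases i
    · simp [vecMulVec_apply]
    · simp [vecMulVec_apply, row_one]
  · have row_zero (j : Fin 2) : P 0 j = -(v 1 / v 0) * P 1 j := by
      field_simp
      linear_combination rows j
    refine ⟨![-(v 1 / v 0), 1], P 1, ?_⟩
    ext i j
    fin_cases i
    · simp [vecMulVec_apply, row_zero]
    · simp [vecMulVec_apply]

lemma exists_unit_vecMulVec {P : Matrix (Fin 2) (Fin 2) ℂ} (hP : P.det = 0)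
    (hP1 : (P * Pᴴ).trace = 1) :
    ∃ x y, x ⬝ᵥ star x = 1 ∧ y ⬝ᵥ star y = 1 ∧ P = vecMulVec x y := by
  obtain ⟨x, y, rfl⟩ := exists_eq_vecMulVec_of_det_eq_zero hP
  have hy : y ≠ 0 := by
    rintro rfl
    simp at hP1
  obtain ⟨c, hc, hcy⟩ := exists_smul_dotProduct_star_eq_one hy
  have scale : vecMulVec x y = vecMulVec (c⁻¹ • x) (c • y) := by
    rw [smul_vecMulVec, vecMulVec_smul, inv_smul_smul₀ hc]
  refine ⟨c⁻¹ • x, c • y, ?_, hcy, scale⟩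
  rwa [scale, conjTranspose_vecMulVec, vecMulVec_mul_vecMulVec, hcy, one_smul,
    trace_vecMulVec] at hP1

lemma exists_ne_zero_det_sum_smul_eq_zero {K n : Type*} [Field K] [IsAlgClosed K] [Fintype n]
    [DecidableEq n] [Nonempty n] (M : Fin 2 → Matrix n n K) :
    ∃ x : Fin 2 → K, x ≠ 0 ∧ (∑ a, x a • M a).det = 0 := by
  by_cases h1 : (M 1).det = 0
  · exact ⟨![0, 1], by simp, by simpa using h1⟩
  obtain ⟨μ, hμ⟩ := spectrum.nonempty_of_isAlgClosed_of_finiteDimensional K ((M 1)⁻¹ * M 0)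
  have singular : (algebraMap K (Matrix n n K) μ - (M 1)⁻¹ * M 0).det = 0 := by
    simpa [spectrum.mem_iff, isUnit_iff_isUnit_det] using hμ
  refine ⟨![-1, μ], by simp, ?_⟩
  have factor : ∑ a, (![-1, μ] : Fin 2 → K) a • M a
      = M 1 * (algebraMap K (Matrix n n K) μ - (M 1)⁻¹ * M 0) := by
    rw [Matrix.mul_sub, ← Matrix.mul_assoc, mul_nonsing_inv _ (Ne.isUnit h1), Matrix.one_mul,
      Algebra.algebraMap_eq_smul_one, Matrix.mul_smul, Matrix.mul_one]
    simp [Fin.sum_univ_two, neg_add_eq_sub]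
  rw [factor, det_mul, singular, mul_zero]

end UnitVectors

section Rotation

lemma sum_star_mul_of_mem_unitaryGroup {α n : Type*} [CommRing α] [StarRing α] [Fintype n]
    [DecidableEq n] {V : Matrix n n α} (hV : V ∈ unitaryGroup n α) (a b : n) :
    ∑ i, star (V i a) * V i b = (1 : Matrix n n α) a b :=
  congrFun₂ (mem_unitaryGroup_iff'.mp hV) a b

lemma sum_star_smul_rotate {α n E : Type*} [CommRing α] [StarRing α] [Fintype n] [DecidableEq n]
    [AddCommGroup E] [Module α E] {V : Matrix n n α} (hV : V ∈ unitaryGroup n α) (M : n → E)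
    (a : n) : ∑ i, star (V i a) • ∑ b, V i b • M b = M a := by
  simp only [Finset.smul_sum, smul_smul]
  rw [Finset.sum_comm]
  simp [← Finset.sum_smul, sum_star_mul_of_mem_unitaryGroup hV, one_apply]

variable {α n p q : Type*} [CommRing α] [StarRing α] [Fintype n] [Fintype q] {V : Matrix n n α}
  (M : n → Matrix p q α)

lemma rotate_mul_conjTranspose (i : n) :
    (∑ a, V i a • M a) * (∑ a, V i a • M a)ᴴ
      = ∑ b, ∑ a, (star (V i b) * V i a) • (M a * (M b)ᴴ) := by
  simp only [conjTranspose_sum, conjTranspose_smul, Matrix.sum_mul, Matrix.mul_sum,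
    Matrix.smul_mul, Matrix.mul_smul, Finset.smul_sum, smul_smul]

variable [DecidableEq n]

lemma sum_rotate_mul_conjTranspose (hV : V ∈ unitaryGroup n α) :
    ∑ i, (∑ a, V i a • M a) * (∑ a, V i a • M a)ᴴ = ∑ a, M a * (M a)ᴴ := by
  simp only [rotate_mul_conjTranspose]
  calc ∑ i, ∑ b, ∑ a, (star (V i b) * V i a) • (M a * (M b)ᴴ)
      = ∑ b, ∑ a, (∑ i, star (V i b) * V i a) • (M a * (M b)ᴴ) := by
        simp only [Finset.sum_smul]
        rw [Finset.sum_comm]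
        exact Finset.sum_congr rfl fun b _ => Finset.sum_comm
    _ = ∑ a, M a * (M a)ᴴ := by simp [sum_star_mul_of_mem_unitaryGroup hV, one_apply]

lemma trace_rotate_mul_conjTranspose [Fintype p] (hV : V ∈ unitaryGroup n α)
    (hM : ∀ a b, (M a * (M b)ᴴ).trace = (1 : Matrix n n α) a b) (i : n) :
    ((∑ a, V i a • M a) * (∑ a, V i a • M a)ᴴ).trace = 1 := by
  rw [rotate_mul_conjTranspose, trace_sum]
  simp only [trace_sum, trace_smul, hM, one_apply, smul_eq_mul, mul_ite, mul_one, mul_zero,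
    Finset.sum_ite_eq', Finset.mem_univ, if_true]
  simpa [mul_apply, mul_comm] using congrFun₂ (mem_unitaryGroup_iff.mp hV) i i

end Rotation

lemma det_eq_zero_of_mul_conjTranspose_add {α : Type*} [CommRing α] [StarRing α] [NoZeroDivisors α]
    {P Q : Matrix (Fin 2) (Fin 2) α} (h : P * Pᴴ + Q * Qᴴ = 1) (htrace : (P * Pᴴ).trace = 1)
    (hP : P.det = 0) : Q.det = 0 := by
  have det_Q : Q.det * star Q.det = 0 := by
    rw [← det_conjTranspose, ← det_mul, eq_sub_of_add_eq' h, det_one_sub_fin_two, htrace, det_mul,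
      hP, zero_mul, sub_self, add_zero]
  exact (mul_eq_zero.mp det_Q).elim id star_eq_zero.mp

lemma exists_unitary_eq_vecMulVec {α n : Type*} [CommRing α] [StarRing α] [Fintype n]
    [DecidableEq n] {P : n → Matrix n n α}
    (hP : ∀ i, ∃ x y, x ⬝ᵥ star x = 1 ∧ y ⬝ᵥ star y = 1 ∧ P i = vecMulVec x y)
    (hrow : ∑ i, P i * (P i)ᴴ = 1) (hcol : ∑ i, (P i)ᵀ * ((P i)ᵀ)ᴴ = 1) :
    ∃ V ∈ unitaryGroup n α, ∃ W ∈ unitaryGroup n α, ∀ i, P i = vecMulVec (Vᵀ i) (Wᵀ i) := by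
  choose x y hx hy hP using hP
  refine ⟨(of x)ᵀ, mem_unitaryGroup_iff.mpr ?_, (of y)ᵀ, mem_unitaryGroup_iff.mpr ?_, hP⟩
  · simp only [hP, conjTranspose_vecMulVec, vecMulVec_mul_vecMulVec, hy, one_smul] at hrow
    rw [← hrow]
    ext b b'
    simp [mul_apply, Matrix.sum_apply, vecMulVec_apply]
  · simp only [hP, transpose_vecMulVec, conjTranspose_vecMulVec, vecMulVec_mul_vecMulVec, hx,
      one_smul] at hcol
    rw [← hcol]
    ext c c'
    simp [mul_apply, Matrix.sum_apply, vecMulVec_apply]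

section GHZ

/-- The slices `T(a, ·, ·)` of a three-qubit tensor, as matrices in the indices of `B` and `C`. -/
def slice (T : Q3 → ℂ) (a : Fin 2) : Matrix (Fin 2) (Fin 2) ℂ :=
  of fun b c => T (a, b, c)

/-- The tensor `∑ i, U eᵢ ⊗ V eᵢ ⊗ W eᵢ`, which for unitary `U`, `V`, `W` is `√2` times a member
of the local unitary orbit of the GHZ-state. -/
def ghzTensor (U V W : Matrix (Fin 2) (Fin 2) ℂ) : Q3 → ℂ :=
  fun v => ∑ i, U v.1 i * V v.2.1 i * W v.2.2 i

lemma rhoA_apply_eq_trace (T : Q3 → ℂ) (a a' : Fin 2) :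
    rhoA T a a' = (slice T a * (slice T a')ᴴ).trace := by
  simp [rhoA, slice, trace, mul_apply]

lemma rhoB_eq_sum_slice (T : Q3 → ℂ) : rhoB T = ∑ a, slice T a * (slice T a)ᴴ := by
  ext b b'
  simp [rhoB, slice, mul_apply]

lemma rhoC_eq_sum_slice (T : Q3 → ℂ) : rhoC T = ∑ a, (slice T a)ᵀ * ((slice T a)ᵀ)ᴴ := by
  ext c c'
  simp [rhoC, slice, mul_apply]

lemma slice_ghzTensor (U V W : Matrix (Fin 2) (Fin 2) ℂ) (a : Fin 2) :
    slice (ghzTensor U V W) a = V * diagonal (U a) * Wᵀ := by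
  ext b c
  simp [slice, ghzTensor, mul_apply, mul_comm, mul_left_comm]

lemma exists_ghzTensor_of_marginals_eq_one {T : Q3 → ℂ} (hA : rhoA T = 1) (hB : rhoB T = 1)
    (hC : rhoC T = 1) :
    ∃ U ∈ unitaryGroup (Fin 2) ℂ, ∃ V ∈ unitaryGroup (Fin 2) ℂ, ∃ W ∈ unitaryGroup (Fin 2) ℂ,
      T = ghzTensor U V W := by
  obtain ⟨x, hx, hdet⟩ := exists_ne_zero_det_sum_smul_eq_zero (slice T)
  obtain ⟨c, -, hc⟩ := exists_smul_dotProduct_star_eq_one hx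
  obtain ⟨R, hR, hR0⟩ := exists_mem_unitaryGroup_row_eq hc
  set P : Fin 2 → Matrix (Fin 2) (Fin 2) ℂ := fun i => ∑ a, R i a • slice T a with hPdef
  have trace_P (i : Fin 2) : (P i * (P i)ᴴ).trace = 1 :=
    trace_rotate_mul_conjTranspose _ hR (fun a b => by rw [← rhoA_apply_eq_trace, hA]) i
  have sum_P : ∑ i, P i * (P i)ᴴ = 1 := by
    rw [sum_rotate_mul_conjTranspose _ hR, ← rhoB_eq_sum_slice, hB]
  have sum_P_transpose : ∑ i, (P i)ᵀ * ((P i)ᵀ)ᴴ = 1 := by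
    simp only [hPdef, transpose_sum, transpose_smul]
    rw [sum_rotate_mul_conjTranspose _ hR, ← rhoC_eq_sum_slice, hC]
  have det_P_zero : (P 0).det = 0 := by
    have scaled : P 0 = c • ∑ a, x a • slice T a := by
      simp only [hPdef, hR0, Pi.smul_apply, smul_assoc, Finset.smul_sum]
    rw [scaled, det_smul, hdet, mul_zero]
  have det_P_one : (P 1).det = 0 :=
    det_eq_zero_of_mul_conjTranspose_add (by rw [← sum_P, Fin.sum_univ_two]) (trace_P 0) det_P_zero
  obtain ⟨V, hV, W, hW, hVW⟩ := exists_unitary_eq_vecMulVec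
    (fun i => exists_unit_vecMulVec (by fin_cases i <;> assumption) (trace_P i))
    sum_P sum_P_transpose
  refine ⟨star R, Unitary.star_mem hR, V, hV, W, hW, ?_⟩
  ext ⟨a, b, c⟩
  have recover : ∑ i, star (R i a) • P i = slice T a := sum_star_smul_rotate hR _ a
  calc T (a, b, c)
      = (∑ i, star (R i a) • P i) b c := by rw [recover, slice, of_apply]
    _ = ghzTensor (star R) V W (a, b, c) := by
        simp [hVW, ghzTensor, Matrix.sum_apply, vecMulVec_apply, mul_assoc]

lemma rhoA_ghzTensor {U V W : Matrix (Fin 2) (Fin 2) ℂ} (hU : U ∈ unitaryGroup (Fin 2) ℂ)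
    (hV : V ∈ unitaryGroup (Fin 2) ℂ) (hW : W ∈ unitaryGroup (Fin 2) ℂ) :
    rhoA (ghzTensor U V W) = 1 := by
  have hVV : Vᴴ * V = 1 := mem_unitaryGroup_iff'.mp hV
  have hWW : Wᵀ * Wᵀᴴ = 1 := by
    calc Wᵀ * Wᵀᴴ = (Wᴴ * W)ᵀ := (transpose_mul _ _).symm
      _ = 1 := by rw [← star_eq_conjTranspose, mem_unitaryGroup_iff'.mp hW, transpose_one]
  ext a a'
  calc rhoA (ghzTensor U V W) a a'
      = (V * (diagonal (U a) * (Wᵀ * Wᵀᴴ) * (diagonal (U a'))ᴴ * Vᴴ)).trace := by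
        simp only [rhoA_apply_eq_trace, slice_ghzTensor, conjTranspose_mul, Matrix.mul_assoc]
    _ = (diagonal (U a) * (diagonal (U a'))ᴴ).trace := by
        rw [trace_mul_comm, hWW, Matrix.mul_assoc, hVV, Matrix.mul_one, Matrix.mul_one]
    _ = (U * Uᴴ) a a' := by
        simp [diagonal_conjTranspose, trace, mul_apply]
    _ = (1 : Matrix (Fin 2) (Fin 2) ℂ) a a' := congrFun₂ (mem_unitaryGroup_iff.mp hU) a a'

lemma rhoB_ghzTensor (U V W : Matrix (Fin 2) (Fin 2) ℂ) :
    rhoB (ghzTensor U V W) = rhoA (ghzTensor V U W) := by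
  ext b b'
  simp only [rhoA, rhoB, ghzTensor, mul_comm (U _ _)]

lemma rhoC_ghzTensor (U V W : Matrix (Fin 2) (Fin 2) ℂ) :
    rhoC (ghzTensor U V W) = rhoA (ghzTensor W U V) := by
  ext c c'
  simp only [rhoA, rhoC, ghzTensor, mul_comm (W _ _), mul_right_comm _ (W _ _)]

lemma rhoA_smul (c : ℂ) (Ψ : Q3 → ℂ) : rhoA (c • Ψ) = (c * star c) • rhoA Ψ := by
  ext a a'
  simp only [rhoA, Pi.smul_apply, smul_eq_mul, map_mul, Matrix.smul_apply, Finset.mul_sum,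
    mul_mul_mul_comm c, Complex.star_def]

lemma rhoB_smul (c : ℂ) (Ψ : Q3 → ℂ) : rhoB (c • Ψ) = (c * star c) • rhoB Ψ := by
  ext b b'
  simp only [rhoB, Pi.smul_apply, smul_eq_mul, map_mul, Matrix.smul_apply, Finset.mul_sum,
    mul_mul_mul_comm c, Complex.star_def]

lemma rhoC_smul (c : ℂ) (Ψ : Q3 → ℂ) : rhoC (c • Ψ) = (c * star c) • rhoC Ψ := by
  ext d d'
  simp only [rhoC, Pi.smul_apply, smul_eq_mul, map_mul, Matrix.smul_apply, Finset.mul_sum,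
    mul_mul_mul_comm c, Complex.star_def]

lemma sum_mul_GHZstate (f : Q3 → ℂ) :
    ∑ w, f w * GHZstate w = ((√2 : ℝ) : ℂ)⁻¹ * ∑ i, f (i, i, i) := by
  simp only [GHZstate, mul_ite, mul_zero, Fintype.sum_prod_type, Prod.mk.injEq, Fin.sum_univ_two,
    and_true, zero_ne_one, and_false, or_false, one_ne_zero, false_or, ↓reduceIte, add_zero,
    zero_add]
  ring

lemma luEquiv_GHZstate_iff (Ψ : Q3 → ℂ) :
    LUequiv GHZstate Ψ ↔ ∃ U ∈ unitaryGroup (Fin 2) ℂ, ∃ V ∈ unitaryGroup (Fin 2) ℂ,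
      ∃ W ∈ unitaryGroup (Fin 2) ℂ, Ψ = ((√2 : ℝ) : ℂ)⁻¹ • ghzTensor U V W := by
  simp only [LUequiv, sum_mul_GHZstate]
  constructor
  · rintro ⟨U, V, W, hU, -, hV, -, hW, -, h⟩
    exact ⟨U, mem_unitaryGroup_iff.mpr hU, V, mem_unitaryGroup_iff.mpr hV, W,
      mem_unitaryGroup_iff.mpr hW, funext h⟩
  · rintro ⟨U, hU, V, hV, W, hW, h⟩
    exact ⟨U, V, W, mem_unitaryGroup_iff.mp hU, mem_unitaryGroup_iff'.mp hU,
      mem_unitaryGroup_iff.mp hV, mem_unitaryGroup_iff'.mp hV,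
      mem_unitaryGroup_iff.mp hW, mem_unitaryGroup_iff'.mp hW, congrFun h⟩

theorem luEquiv_GHZstate_iff_marginals (Ψ : Q3 → ℂ) :
    LUequiv GHZstate Ψ ↔
      rhoA Ψ = (1 / 2 : ℂ) • 1 ∧ rhoB Ψ = (1 / 2 : ℂ) • 1 ∧ rhoC Ψ = (1 / 2 : ℂ) • 1 := by
  have sq_norm : ((√2 : ℝ) : ℂ) * star ((√2 : ℝ) : ℂ) = 2 := by
    rw [Complex.star_def, Complex.conj_ofReal]
    exact_mod_cast Real.mul_self_sqrt zero_le_two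
  have sqrt_ne_zero : ((√2 : ℝ) : ℂ) ≠ 0 := left_ne_zero_of_mul (sq_norm ▸ two_ne_zero)
  rw [luEquiv_GHZstate_iff]
  constructor
  · rintro ⟨U, hU, V, hV, W, hW, rfl⟩
    have inv_sq_norm : ((√2 : ℝ) : ℂ)⁻¹ * star ((√2 : ℝ) : ℂ)⁻¹ = 1 / 2 := by
      rw [star_inv₀, ← mul_inv, sq_norm, one_div]
    rw [rhoA_smul, rhoB_smul, rhoC_smul, rhoB_ghzTensor, rhoC_ghzTensor, rhoA_ghzTensor hU hV hW,
      rhoA_ghzTensor hV hU hW, rhoA_ghzTensor hW hU hV, inv_sq_norm]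
    exact ⟨rfl, rfl, rfl⟩
  · rintro ⟨hA, hB, hC⟩
    obtain ⟨U, hU, V, hV, W, hW, h⟩ :=
      exists_ghzTensor_of_marginals_eq_one (T := ((√2 : ℝ) : ℂ) • Ψ)
        (by rw [rhoA_smul, hA, sq_norm, smul_smul, mul_one_div_cancel two_ne_zero, one_smul])
        (by rw [rhoB_smul, hB, sq_norm, smul_smul, mul_one_div_cancel two_ne_zero, one_smul])
        (by rw [rhoC_smul, hC, sq_norm, smul_smul, mul_one_div_cancel two_ne_zero, one_smul])
    exact ⟨U, hU, V, hV, W, hW, by rw [← h, inv_smul_smul₀ sqrt_ne_zero]⟩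

end GHZ

end ThreeQubit

open ThreeQubit

theorem phiABC_upper_bound
    (Ψ : Q3 → ℂ) (hΨ : ∑ v : Q3, ‖Ψ v‖ ^ 2 = 1) :
    phiABC Ψ ≤ 99 / 2 ∧ (phiABC Ψ = 99 / 2 ↔ LUequiv GHZstate Ψ) := by
  have formula := phiABC_eq Ψ hΨ
  have hermitian_C : (rhoC Ψ - (1 / 2 : ℂ) • 1).IsHermitian :=
    (isHermitian_rhoC Ψ).sub (isHermitian_one.smul (by simp [IsSelfAdjoint]))
  have hermitian_AB : (rhoAB Ψ - spinFlip (rhoAB Ψ)).IsHermitian :=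
    (isHermitian_rhoAB Ψ).sub (isHermitian_spinFlip (isHermitian_rhoAB Ψ))
  have nonneg_C := re_trace_sq_nonneg hermitian_C
  have nonneg_AB := re_trace_sq_nonneg hermitian_AB
  have nonneg_weighted := re_trace_mul_sq_nonneg (posSemidef_rhoAB Ψ) hermitian_AB
  refine ⟨by linarith, ?_⟩
  have flip_iff := spinFlip_eq_self_iff (rhoAB Ψ)
  rw [traceRight_rhoAB, traceLeft_rhoAB, trace_rhoAB Ψ hΨ] at flip_iff
  rw [luEquiv_GHZstate_iff_marginals, ← and_assoc, ← flip_iff]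
  constructor
  · intro h
    have defect_AB := eq_zero_of_re_trace_sq_eq_zero hermitian_AB (by linarith)
    have defect_C := eq_zero_of_re_trace_sq_eq_zero hermitian_C (by linarith)
    exact ⟨(sub_eq_zero.mp defect_AB).symm, sub_eq_zero.mp defect_C⟩
  · rintro ⟨hAB, hC⟩
    simp [formula, hAB, hC]

end
end
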